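/- (Isoperimetric-type inequality for Jacobians) Let f : Ω → ℝ^n be a C¹ (or Sobolev W^{1,n-1}) map on an open set Ω ⊂ ℝ^n, and suppose the closed ball B(x,r) ⊂ Ω. Then | avg_{B(x,r)} J(y,f) dy | ≤ C(n) ( avg_{S(x,r)} |D^♯f(y)| dy )^{n/(n-1)}, where J(y,f) = det Df(y) and D^♯f is the cofactor matrix of Df. -/

import Mathlib

open MeasureTheory Metric ENNReal Matrix
noncomputable section

variable {n : ℕ}

/-- The matrix of the differential `Df(y)` in the standard basis of `ℝ^n`. -/
def diffMatrix (f : EuclideanSpace ℝ (Fin n) → EuclideanSpace ℝ (Fin n))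
    (y : EuclideanSpace ℝ (Fin n)) : Matrix (Fin n) (Fin n) ℝ :=
  fun i j => fderiv ℝ f y (EuclideanSpace.single j 1) i

/-- The Jacobian determinant `J(y,f) = det Df(y)`. -/
def jacDet (f : EuclideanSpace ℝ (Fin n) → EuclideanSpace ℝ (Fin n))
    (y : EuclideanSpace ℝ (Fin n)) : ℝ :=
  (diffMatrix f y).det

/-- The (Hilbert–Schmidt) norm of the cofactor matrix `D^♯f(y)` of the differential,
the cofactor matrix being the transpose of the adjugate. -/
def cofNorm (f : EuclideanSpace ℝ (Fin n) → EuclideanSpace ℝ (Fin n))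
    (y : EuclideanSpace ℝ (Fin n)) : ℝ :=
  Real.sqrt (∑ i, ∑ j, ((Matrix.adjugate (diffMatrix f y))ᵀ i j) ^ 2)


open Filter Topology Set
open scoped NNReal Pointwise

local notation "𝔼" => EuclideanSpace ℝ (Fin n)

lemma diffMatrix_eq_toMatrix (f : 𝔼 → 𝔼) (y : 𝔼) :
    diffMatrix f y = LinearMap.toMatrix (EuclideanSpace.basisFun (Fin n) ℝ).toBasis
      (EuclideanSpace.basisFun (Fin n) ℝ).toBasis (fderiv ℝ f y : 𝔼 →ₗ[ℝ] 𝔼) := by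
  ext i j
  simp [diffMatrix, LinearMap.toMatrix_apply]

lemma jacDet_eq (f : 𝔼 → 𝔼) (y : 𝔼) : jacDet f y = (fderiv ℝ f y).det := by
  rw [jacDet, diffMatrix_eq_toMatrix, LinearMap.det_toMatrix]

lemma continuous_diffMatrix {f : 𝔼 → 𝔼} (hf : ContDiff ℝ 1 f) :
    Continuous (diffMatrix f) := by
  have := hf.continuous_fderiv one_ne_zero
  refine continuous_matrix fun i j => ?_
  simp only [diffMatrix]
  have h2 : Continuous fun y => fderiv ℝ f y (EuclideanSpace.single j 1) := by fun_prop
  exact (EuclideanSpace.proj (𝕜 := ℝ) i).continuous.comp h2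

lemma continuous_jacDet {f : 𝔼 → 𝔼} (hf : ContDiff ℝ 1 f) : Continuous (jacDet f) :=
  (continuous_diffMatrix hf).matrix_det

lemma perturb_image (R : ℝ) {g : 𝔼 → 𝔼} (hn : 0 < n) (hsupp : ∀ y, y ∉ closedBall (0 : 𝔼) R → g y = 0)
    {c : ℝ≥0} (hc : c < 1) (hg : LipschitzWith c g) :
    Function.Injective (fun y => y + g y) ∧
    (fun y => y + g y) '' closedBall (0 : 𝔼) R = closedBall 0 R := by
  have happ : ApproximatesLinearOn (fun y => y + g y)
      ((ContinuousLinearEquiv.refl ℝ 𝔼 : 𝔼 ≃L[ℝ] 𝔼) : 𝔼 →L[ℝ] 𝔼) univ c := by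
    intro x _ y _
    have : x + g x - (y + g y) - (x - y) = g x - g y := by abel
    simpa [this] using hg.norm_sub_le x y
  have hnt : Nontrivial 𝔼 := by
    have : Nonempty (Fin n) := ⟨⟨0, hn⟩⟩
    infer_instance
  have hN : c < ‖((ContinuousLinearEquiv.refl ℝ 𝔼).symm : 𝔼 →L[ℝ] 𝔼)‖₊⁻¹ := by
    have : ‖((ContinuousLinearEquiv.refl ℝ 𝔼).symm : 𝔼 →L[ℝ] 𝔼)‖₊ = 1 := by
      have : ((ContinuousLinearEquiv.refl ℝ 𝔼).symm : 𝔼 →L[ℝ] 𝔼) = ContinuousLinearMap.id ℝ 𝔼 := rfl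
      rw [this, ContinuousLinearMap.nnnorm_id]
    rw [this]; simpa using hc
  have hinj : Function.Injective (fun y => y + g y) := by
    have := happ.injOn (Or.inr hN)
    exact injOn_univ.mp this
  have hsurj : Function.Surjective (fun y => y + g y) := happ.surjective (Or.inr hN)
  refine ⟨hinj, ?_⟩
  have hout : (fun y => y + g y) '' (closedBall (0 : 𝔼) R)ᶜ = (closedBall 0 R)ᶜ := by
    have : EqOn (fun y => y + g y) id (closedBall (0 : 𝔼) R)ᶜ := by
      intro y hy; simp [hsupp y hy]
    rw [this.image_eq, image_id]
  have := image_compl_eq (f := fun y => y + g y) (s := closedBall (0 : 𝔼) R) ⟨hinj, hsurj⟩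
  rw [hout] at this
  exact (compl_injective this).symm

lemma integral_det_one_add (R : ℝ) {g : 𝔼 → 𝔼} (hn : 0 < n) (hd : Differentiable ℝ g)
    (hsupp : ∀ y, y ∉ closedBall (0 : 𝔼) R → g y = 0)
    {c : ℝ≥0} (hc : c < 1) (hg : LipschitzWith c g)
    (hpos : ∀ y, 0 ≤ (1 + diffMatrix g y).det) :
    ∫ y in closedBall (0 : 𝔼) R, (1 + diffMatrix g y).det = volume.real (closedBall (0 : 𝔼) R) := by
  obtain ⟨hinj, him⟩ := perturb_image R hn hsupp hc hg
  have h1 := integral_image_eq_integral_abs_det_fderiv_smul volume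
    (measurableSet_closedBall (x := (0 : 𝔼)) (ε := R)) (f := fun y => y + g y)
    (f' := fun y => fderiv ℝ (fun y => y + g y) y)
    (fun x _ => ((differentiable_id.add hd) x).hasFDerivAt.hasFDerivWithinAt) hinj.injOn
    (fun _ => (1 : ℝ))
  rw [him] at h1
  simp only [smul_eq_mul, mul_one, integral_const, measureReal_restrict_apply_univ] at h1
  rw [h1]
  refine integral_congr_ae (Eventually.of_forall fun y => ?_)
  have : diffMatrix (fun y => y + g y) y = 1 + diffMatrix g y := by
    ext i j
    have e : fderiv ℝ (fun y => y + g y) y = ContinuousLinearMap.id ℝ 𝔼 + fderiv ℝ g y := by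
      rw [fderiv_fun_add differentiableAt_fun_id (hd y), fderiv_fun_id]
    simp [diffMatrix, e, Matrix.one_apply]
  simp only
  rw [← jacDet_eq, jacDet, this, abs_of_nonneg (hpos y)]

open Polynomial in
lemma interp (S : ℝ) (N : ℕ) : ∃ c : ℕ → ℝ, ∀ p : ℝ[X], p.degree < ((N + 1 : ℕ) : WithBot ℕ) →
    p.eval 0 = ∑ k ∈ Finset.range (N + 1), c k * p.eval (S + k) := by
  refine ⟨fun k => (Lagrange.basis (Finset.range (N+1)) (fun k : ℕ => S + k) k).eval 0, ?_⟩
  intro p hp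
  have hinj : Set.InjOn (fun k : ℕ => S + (k : ℝ)) (Finset.range (N+1)) := by
    intro a _ b _ h; simpa using h
  have := Lagrange.eq_interpolate (f := p) hinj (by simpa using hp)
  conv_lhs => rw [this]
  simp [Lagrange.interpolate_apply, Polynomial.eval_finsetSum, mul_comm]

open Polynomial in
lemma interp_det (S : ℝ) (hn : 0 < n) : ∃ c : ℕ → ℝ,
    (∑ k ∈ Finset.range (n + 1), c k * (S + k) ^ n = 0) ∧
    ∀ A : Matrix (Fin n) (Fin n) ℝ,
      A.det = ∑ k ∈ Finset.range (n + 1), c k * ((S + k) • (1 : Matrix (Fin n) (Fin n) ℝ) + A).det := by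
  obtain ⟨c, hc⟩ := interp S n
  refine ⟨c, ?_, fun A => ?_⟩
  · have := hc (X ^ n) (by rw [degree_X_pow]; exact_mod_cast Nat.lt_succ_self n)
    simpa [hn.ne'] using this.symm
  · have h1 : ∀ s : ℝ, (-A).charpoly.eval s = (s • (1 : Matrix (Fin n) (Fin n) ℝ) + A).det := by
      intro s
      rw [Matrix.eval_charpoly]
      congr 1
      simp [Matrix.smul_one_eq_diagonal, Matrix.scalar_apply]
    have := hc (-A).charpoly (by
      rw [Matrix.charpoly_degree_eq_dim, Fintype.card_fin]; exact_mod_cast Nat.lt_succ_self n)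
    simp only [h1] at this
    simpa using this

lemma integral_jacDet_eq_zero (hn : 0 < n) {h : 𝔼 → 𝔼} (hh : ContDiff ℝ 1 h)
    (hc : HasCompactSupport h) : ∫ y, jacDet h y = 0 := by
  obtain ⟨R, hR⟩ := hc.isCompact.isBounded.subset_closedBall (0 : 𝔼)
  have hsupp : ∀ y, y ∉ closedBall (0 : 𝔼) R → h y = 0 := fun y hy =>
    image_eq_zero_of_notMem_tsupport fun h' => hy (hR h')
  have hn' : Nonempty (Fin n) := ⟨⟨0, hn⟩⟩
  have hsuppD : ∀ y, y ∉ closedBall (0 : 𝔼) R → jacDet h y = 0 := by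
    intro y hy
    have : fderiv ℝ h y = 0 := by
      by_contra hne
      exact hy (hR (support_fderiv_subset ℝ hne))
    have h0 : diffMatrix h y = 0 := by ext i j; simp [diffMatrix, this]
    rw [jacDet, h0, Matrix.det_zero]
  rw [← setIntegral_eq_integral_of_forall_compl_eq_zero (s := closedBall (0 : 𝔼) R) hsuppD]
  obtain ⟨L, hL⟩ := hh.lipschitzWith_of_hasCompactSupport hc one_ne_zero
  -- neighborhoods where determinant positive
  have hcont := continuous_diffMatrix hh
  have hpos : ∃ S : ℝ, 0 < S ∧ ∀ s : ℝ, S ≤ s → ∀ y, 0 ≤ (1 + s⁻¹ • diffMatrix h y).det := by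
    have hdet : Continuous fun q : ℝ × 𝔼 => (1 + q.1 • diffMatrix h q.2).det := by
      apply Continuous.matrix_det
      exact continuous_const.add (continuous_fst.smul (hcont.comp continuous_snd))
    have hev : ∀ᶠ t in 𝓝 (0 : ℝ), ∀ y ∈ closedBall (0 : 𝔼) R, 0 < (1 + t • diffMatrix h y).det := by
      refine (isCompact_closedBall (0 : 𝔼) R).eventually_forall_of_forall_eventually fun y _ => ?_
      have := (hdet.tendsto (0, y)).eventually_const_lt (u := 0) (by simp)
      exact this
    obtain ⟨t, ht, hball⟩ := Metric.eventually_nhds_iff.mp hev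
    refine ⟨2 / t, by positivity, fun s hs y => ?_⟩
    have hs0 : 0 < s := lt_of_lt_of_le (by positivity) hs
    by_cases hy : y ∈ closedBall (0 : 𝔼) R
    · refine (hball ?_ y hy).le
      rw [Real.dist_eq, sub_zero, abs_of_pos (by positivity)]
      rw [div_le_iff₀ ht] at hs
      rw [inv_lt_iff_one_lt_mul₀ hs0]; linarith
    · have : fderiv ℝ h y = 0 := by
        by_contra hne
        exact hy (hR (support_fderiv_subset ℝ hne))
      have h0 : diffMatrix h y = 0 := by ext i j; simp [diffMatrix, this]
      simp [h0]
  obtain ⟨S, hS0, hS⟩ := hpos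
  obtain ⟨c, hc0, hcA⟩ := interp_det (n := n) (max S (L + 1)) hn
  have key : ∀ s : ℝ, max S (L + 1) ≤ s →
      ∫ y in closedBall (0 : 𝔼) R, (s • (1 : Matrix (Fin n) (Fin n) ℝ) + diffMatrix h y).det
        = s ^ n * volume.real (closedBall (0 : 𝔼) R) := by
    intro s hs
    have hs0 : 0 < s := lt_of_lt_of_le hS0 ((le_max_left _ _).trans hs)
    have hm : ∀ y, diffMatrix (fun y => s⁻¹ • h y) y = s⁻¹ • diffMatrix h y := by
      intro y
      ext i j
      have : fderiv ℝ (fun y => s⁻¹ • h y) y = s⁻¹ • fderiv ℝ h y :=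
        fderiv_fun_const_smul (hh.differentiable one_ne_zero y) _
      simp [diffMatrix, this]
    have h1 := integral_det_one_add (n := n) R (g := fun y => s⁻¹ • h y) hn
      ((hh.differentiable one_ne_zero).fun_const_smul _)
      (fun y hy => by simp [hsupp y hy]) (c := ‖s⁻¹‖₊ * L) (by
        rw [← NNReal.coe_lt_coe]
        have : (L : ℝ) < s := by linarith [(le_max_right S (L+1 : ℝ)).trans hs]
        simp only [NNReal.coe_mul, coe_nnnorm, norm_inv, Real.norm_eq_abs, abs_of_pos hs0, NNReal.coe_one]
        rwa [inv_mul_lt_iff₀ hs0, mul_one])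
      ((lipschitzWith_smul (s⁻¹)).comp hL)
      (fun y => by rw [hm]; exact hS s ((le_max_left _ _).trans hs) y)
    rw [← h1, ← integral_const_mul]
    refine integral_congr_ae (Eventually.of_forall fun y => ?_)
    simp only
    rw [hm]
    have : s • (1 : Matrix (Fin n) (Fin n) ℝ) + diffMatrix h y
        = s • (1 + s⁻¹ • diffMatrix h y) := by
      rw [smul_add, smul_smul, mul_inv_cancel₀ hs0.ne', one_smul]
    rw [this, Matrix.det_smul, Fintype.card_fin]
  have hint : ∀ s : ℝ, IntegrableOn
      (fun y => (s • (1 : Matrix (Fin n) (Fin n) ℝ) + diffMatrix h y).det) (closedBall (0 : 𝔼) R) := by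
    intro s
    have hcd : Continuous fun y => (s • (1 : Matrix (Fin n) (Fin n) ℝ) + diffMatrix h y).det :=
      (continuous_const.add hcont).matrix_det
    exact hcd.continuousOn.integrableOn_compact (isCompact_closedBall _ _)
  have : ∀ y, jacDet h y = ∑ k ∈ Finset.range (n + 1), c k *
      ((max S (L+1) + k) • (1 : Matrix (Fin n) (Fin n) ℝ) + diffMatrix h y).det := fun y => hcA _
  simp_rw [this]
  rw [integral_finsetSum _ (fun k _ => (hint _).const_mul _)]
  simp_rw [integral_const_mul]
  have : ∀ k : ℕ, max S (L + 1 : ℝ) ≤ max S (L+1) + k := fun k => by simp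
  simp_rw [fun k : ℕ => key _ (this k), ← mul_assoc, ← Finset.sum_mul, hc0, zero_mul]

lemma cof_le_cofNorm (f : 𝔼 → 𝔼) (y : 𝔼) (i j : Fin n) :
    |(Matrix.adjugate (diffMatrix f y))ᵀ i j| ≤ cofNorm f y := by
  rw [cofNorm, ← Real.sqrt_sq_eq_abs]
  apply Real.sqrt_le_sqrt
  calc ((Matrix.adjugate (diffMatrix f y))ᵀ i j) ^ 2
      ≤ ∑ j, ((Matrix.adjugate (diffMatrix f y))ᵀ i j) ^ 2 :=
        Finset.single_le_sum (f := fun j => ((Matrix.adjugate (diffMatrix f y))ᵀ i j) ^ 2)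
          (fun _ _ => sq_nonneg _) (Finset.mem_univ j)
    _ ≤ _ := Finset.single_le_sum (f := fun i => ∑ j, ((Matrix.adjugate (diffMatrix f y))ᵀ i j) ^ 2)
          (fun _ _ => Finset.sum_nonneg fun _ _ => sq_nonneg _) (Finset.mem_univ i)

lemma cofNorm_nonneg (f : 𝔼 → 𝔼) (y : 𝔼) : 0 ≤ cofNorm f y := Real.sqrt_nonneg _

lemma continuous_cofNorm {f : 𝔼 → 𝔼} (hf : ContDiff ℝ 1 f) : Continuous (cofNorm f) := by
  have h : Continuous fun y => (Matrix.adjugate (diffMatrix f y))ᵀ :=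
    (continuous_diffMatrix hf).matrix_adjugate.matrix_transpose
  refine Real.continuous_sqrt.comp ?_
  refine continuous_finsetSum _ fun i _ => continuous_finsetSum _ fun j _ => ?_
  exact (h.matrix_elem i j).pow 2

lemma det_updateRow_le (f : 𝔼 → 𝔼) (y : 𝔼) (i : Fin n) (L : 𝔼 →L[ℝ] ℝ) :
    |((diffMatrix f y).updateRow i (fun j => L (EuclideanSpace.single j 1))).det|
      ≤ n * (cofNorm f y * ‖L‖) := by
  rw [← Matrix.cramer_transpose_apply, Matrix.cramer_eq_adjugate_mulVec,
    ← Matrix.adjugate_transpose, Matrix.mulVec, dotProduct]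
  refine (Finset.abs_sum_le_sum_abs _ _).trans ?_
  calc _ ≤ ∑ j : Fin n, cofNorm f y * ‖L‖ := by
        refine Finset.sum_le_sum fun j _ => ?_
        rw [abs_mul]
        refine mul_le_mul (cof_le_cofNorm f y i j) ?_ (abs_nonneg _) (cofNorm_nonneg _ _)
        have := L.le_opNorm (EuclideanSpace.single j (1 : ℝ))
        simpa using this
    _ = _ := by simp

lemma norm_le_sum_basis (L : 𝔼 →L[ℝ] ℝ) : ‖L‖ ≤ ∑ i, |L (EuclideanSpace.single i 1)| := by
  refine L.opNorm_le_bound (Finset.sum_nonneg fun _ _ => abs_nonneg _) fun v => ?_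
  have hv : v = ∑ i, v i • (EuclideanSpace.single i (1 : ℝ) : 𝔼) := by
    have := (EuclideanSpace.basisFun (Fin n) ℝ).sum_repr v
    simpa using this.symm
  conv_lhs => rw [hv]
  rw [map_sum, Finset.sum_mul]
  refine (norm_sum_le _ _).trans (Finset.sum_le_sum fun i _ => ?_)
  rw [map_smul, norm_smul, mul_comm]
  refine mul_le_mul_of_nonneg_left ?_ (abs_nonneg _)
  exact PiLp.norm_apply_le v i

lemma null_lagrangian (hn : 0 < n) {f : 𝔼 → 𝔼} (hf : ContDiff ℝ 1 f) (hfc : HasCompactSupport f)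
    {ψ : 𝔼 → ℝ} (hψ : ContDiff ℝ 1 ψ) (hψc : HasCompactSupport ψ)
    {φ : 𝔼 → ℝ} (hφ : ContDiff ℝ 1 φ) (i : Fin n) :
    ∫ y, ψ y * fderiv ℝ φ (f y) (EuclideanSpace.single i 1) * jacDet f y =
      - ∫ y, φ (f y) *
        ((diffMatrix f y).updateRow i (fun j => fderiv ℝ ψ y (EuclideanSpace.single j 1))).det := by
  set w : 𝔼 → ℝ := fun y => ψ y * φ (f y) with hw
  have hwd : ContDiff ℝ 1 w := hψ.mul (hφ.comp hf)
  have hproj : ContDiff ℝ 1 (fun y => f y i) :=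
    (EuclideanSpace.proj (𝕜 := ℝ) i).contDiff.comp hf
  set h : 𝔼 → 𝔼 := fun y => f y + (w y - f y i) • EuclideanSpace.single i (1 : ℝ) with hh
  have hhd : ContDiff ℝ 1 h := hf.add ((hwd.sub hproj).smul contDiff_const)
  have hhc : HasCompactSupport h := by
    refine HasCompactSupport.intro (K := tsupport f ∪ tsupport ψ)
      (hfc.isCompact.union hψc.isCompact) fun y hy => ?_
    have h1 : f y = 0 := image_eq_zero_of_notMem_tsupport fun h' => hy (Or.inl h')
    have h2 : ψ y = 0 := image_eq_zero_of_notMem_tsupport fun h' => hy (Or.inr h')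
    simp [hh, hw, h1, h2]
  have hmat : ∀ y, diffMatrix h y = (diffMatrix f y).updateRow i
      (fun j => fderiv ℝ w y (EuclideanSpace.single j 1)) := by
    intro y
    have e1 : HasFDerivAt (fun y => f y i)
        ((EuclideanSpace.proj (𝕜 := ℝ) i).comp (fderiv ℝ f y)) y :=
      (EuclideanSpace.proj (𝕜 := ℝ) i).hasFDerivAt.comp y
        (hf.differentiable one_ne_zero y).hasFDerivAt
    have e2 := (hf.differentiable one_ne_zero y).hasFDerivAt.add
      (((hwd.differentiable one_ne_zero y).hasFDerivAt.sub e1).smul_const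
        (EuclideanSpace.single i (1 : ℝ)))
    have e3 : fderiv ℝ h y = _ := e2.fderiv
    ext k j
    by_cases hk : k = i
    · subst hk
      simp [diffMatrix, e3]
    · simp [diffMatrix, e3, hk]
  have hwf : ∀ y v, fderiv ℝ w y v = ψ y * fderiv ℝ φ (f y) (fderiv ℝ f y v)
      + φ (f y) * fderiv ℝ ψ y v := by
    intro y v
    have e1 := (hφ.differentiable one_ne_zero (f y)).hasFDerivAt.comp y
      (hf.differentiable one_ne_zero y).hasFDerivAt
    have e2 : fderiv ℝ w y = _ := ((hψ.differentiable one_ne_zero y).hasFDerivAt.mul e1).fderiv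
    rw [e2]; simp
  have hdet : ∀ y, jacDet h y = ψ y * fderiv ℝ φ (f y) (EuclideanSpace.single i 1) * jacDet f y
      + φ (f y) *
        ((diffMatrix f y).updateRow i (fun j => fderiv ℝ ψ y (EuclideanSpace.single j 1))).det := by
    intro y
    have hrow : (fun j => fderiv ℝ w y (EuclideanSpace.single j 1)) =
        (ψ y) • (∑ k, (fderiv ℝ φ (f y) (EuclideanSpace.single k 1)) • (diffMatrix f y) k)
        + φ (f y) • (fun j => fderiv ℝ ψ y (EuclideanSpace.single j 1)) := by
      ext j
      rw [hwf]
      have hv : fderiv ℝ f y (EuclideanSpace.single j 1) =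
          ∑ k, (diffMatrix f y k j) • (EuclideanSpace.single k (1 : ℝ) : 𝔼) := by
        have := (EuclideanSpace.basisFun (Fin n) ℝ).sum_repr (fderiv ℝ f y (EuclideanSpace.single j 1))
        simpa [diffMatrix] using this.symm
      rw [hv]
      simp [mul_comm]
    rw [jacDet, hmat, hrow, Matrix.det_updateRow_add, Matrix.det_updateRow_smul,
      Matrix.det_updateRow_smul, Matrix.det_updateRow_sum, jacDet, smul_eq_mul,
      mul_assoc]
  have hz := integral_jacDet_eq_zero hn hhd hhc
  simp_rw [hdet] at hz
  have hcM : Continuous fun y => ((diffMatrix f y).updateRow i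
      (fun j => fderiv ℝ ψ y (EuclideanSpace.single j 1))).det := by
    apply Continuous.matrix_det
    apply (continuous_diffMatrix hf).matrix_updateRow
    have := hψ.continuous_fderiv one_ne_zero
    fun_prop
  have hcφ := hφ.continuous_fderiv one_ne_zero
  have hcf := hf.continuous
  have hcJ := continuous_jacDet hf
  have hcψ := hψ.continuous
  have hI1 : Integrable fun y => ψ y * fderiv ℝ φ (f y) (EuclideanSpace.single i 1) * jacDet f y := by
    apply Continuous.integrable_of_hasCompactSupport
    · exact (hcψ.mul ((hcφ.comp hcf).clm_apply continuous_const)).mul hcJ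
    · exact (hψc.mul_right).mul_right
  have hI2 : Integrable fun y => φ (f y) *
        ((diffMatrix f y).updateRow i (fun j => fderiv ℝ ψ y (EuclideanSpace.single j 1))).det := by
    apply Continuous.integrable_of_hasCompactSupport
    · exact (hφ.continuous.comp hcf).mul hcM
    · refine HasCompactSupport.intro (K := tsupport ψ) hψc.isCompact fun y hy => ?_
      have : fderiv ℝ ψ y = 0 := by
        by_contra hne
        exact hy (support_fderiv_subset ℝ hne)
      have h0 : (fun j => fderiv ℝ ψ y (EuclideanSpace.single j 1)) = (0 : Fin n → ℝ) := by
        ext j; simp [this]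
      rw [h0, Matrix.det_eq_zero_of_row_eq_zero i (by simp), mul_zero]
  rw [integral_add hI1 hI2] at hz
  linarith

/-- The smoothed degree function. -/
def smDeg (f : 𝔼 → 𝔼) (ψ φ : 𝔼 → ℝ) (z : 𝔼) : ℝ := ∫ y, ψ y * φ (z - f y) * jacDet f y

lemma smDeg_hasFDerivAt {f : 𝔼 → 𝔼} (hf : ContDiff ℝ 1 f)
    {ψ : 𝔼 → ℝ} (hψ : ContDiff ℝ 1 ψ) (hψc : HasCompactSupport ψ)
    {φ : 𝔼 → ℝ} (hφ : ContDiff ℝ 1 φ) (hφc : HasCompactSupport φ) :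
    (∀ z, HasFDerivAt (smDeg f ψ φ) (∫ y, (ψ y * jacDet f y) • fderiv ℝ φ (z - f y)) z) ∧
    Continuous (fun z => ∫ y, (ψ y * jacDet f y) • fderiv ℝ φ (z - f y)) ∧
    ∀ z, Integrable (fun y => (ψ y * jacDet f y) • fderiv ℝ φ (z - f y)) := by
  have hcφ := hφ.continuous_fderiv one_ne_zero
  have hcf := hf.continuous
  have hcJ := continuous_jacDet hf
  have hcψ := hψ.continuous
  have hcφ0 := hφ.continuous
  obtain ⟨K, hK⟩ := (hφc.fderiv ℝ).exists_bound_of_continuous hcφ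
  have hcont : ∀ z, Continuous (fun y => (ψ y * jacDet f y) • fderiv ℝ φ (z - f y)) := by
    intro z
    exact (hcψ.mul hcJ).smul (hcφ.comp (continuous_const.sub hcf))
  have hbi : Integrable fun y => |ψ y * jacDet f y| * K := by
    refine Integrable.mul_const ?_ K
    refine Integrable.abs ?_
    exact (hcψ.mul hcJ).integrable_of_hasCompactSupport hψc.mul_right
  have hb : ∀ z y, ‖(ψ y * jacDet f y) • fderiv ℝ φ (z - f y)‖ ≤ |ψ y * jacDet f y| * K := by
    intro z y
    rw [norm_smul]
    exact mul_le_mul_of_nonneg_left (hK _) (abs_nonneg _)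
  have hF : ∀ z, Continuous fun y => ψ y * φ (z - f y) * jacDet f y := fun z =>
    (hcψ.mul (hcφ0.comp (continuous_const.sub hcf))).mul hcJ
  refine ⟨fun z => ?_, ?_, fun z => ?_⟩
  · refine hasFDerivAt_integral_of_dominated_of_fderiv_le (s := univ) univ_mem
      (F := fun z y => ψ y * φ (z - f y) * jacDet f y)
      (F' := fun z y => (ψ y * jacDet f y) • fderiv ℝ φ (z - f y))
      (bound := fun y => |ψ y * jacDet f y| * K) ?_ ?_ ?_ ?_ hbi ?_
    · exact Eventually.of_forall fun z => (hF z).aestronglyMeasurable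
    · exact (hF z).integrable_of_hasCompactSupport (hψc.mul_right).mul_right
    · exact (hcont z).aestronglyMeasurable
    · exact Eventually.of_forall fun y z _ => hb z y
    · refine Eventually.of_forall fun y z _ => ?_
      have e1 : HasFDerivAt (fun z => φ (z - f y)) (fderiv ℝ φ (z - f y)) z := by
        have := (hφ.differentiable one_ne_zero (z - f y)).hasFDerivAt.comp z
          ((hasFDerivAt_id z).sub_const (f y))
        rw [ContinuousLinearMap.comp_id] at this
        exact this
      have e2 := e1.const_mul (ψ y * jacDet f y)
      refine e2.congr_of_eventuallyEq (Eventually.of_forall fun z => ?_)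
      simp only; ring
  · refine continuous_of_dominated (bound := fun y => |ψ y * jacDet f y| * K) ?_ ?_ hbi ?_
    · exact fun z => (hcont z).aestronglyMeasurable
    · exact fun z => Eventually.of_forall fun y => hb z y
    · refine Eventually.of_forall fun y => ?_
      have h5 : Continuous fun x => fderiv ℝ φ (x - f y) := hcφ.comp (continuous_id.sub continuous_const)
      exact h5.const_smul (ψ y * jacDet f y)
  · exact hbi.mono' (hcont z).aestronglyMeasurable (Eventually.of_forall fun y => hb z y)

lemma smDeg_contDiff {f : 𝔼 → 𝔼} (hf : ContDiff ℝ 1 f)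
    {ψ : 𝔼 → ℝ} (hψ : ContDiff ℝ 1 ψ) (hψc : HasCompactSupport ψ)
    {φ : 𝔼 → ℝ} (hφ : ContDiff ℝ 1 φ) (hφc : HasCompactSupport φ) :
    ContDiff ℝ 1 (smDeg f ψ φ) := by
  obtain ⟨h1, h2, -⟩ := smDeg_hasFDerivAt hf hψ hψc hφ hφc
  refine contDiff_one_iff_fderiv.mpr ⟨fun z => (h1 z).differentiableAt, ?_⟩
  have : fderiv ℝ (smDeg f ψ φ) = fun z => ∫ y, (ψ y * jacDet f y) • fderiv ℝ φ (z - f y) :=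
    funext fun z => (h1 z).fderiv
  rw [this]; exact h2

lemma smDeg_hasCompactSupport {f : 𝔼 → 𝔼} (hf : ContDiff ℝ 1 f)
    {ψ : 𝔼 → ℝ} (hψc : HasCompactSupport ψ)
    {φ : 𝔼 → ℝ} (hφc : HasCompactSupport φ) :
    HasCompactSupport (smDeg f ψ φ) := by
  refine HasCompactSupport.intro (K := tsupport φ + f '' tsupport ψ)
    (hφc.isCompact.add (hψc.isCompact.image hf.continuous)) fun z hz => ?_
  rw [smDeg]
  refine integral_eq_zero_of_ae (Eventually.of_forall fun y => ?_)
  by_cases hy : y ∈ tsupport ψ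
  · have : φ (z - f y) = 0 := by
      apply image_eq_zero_of_notMem_tsupport
      intro h'
      exact hz ⟨z - f y, h', f y, mem_image_of_mem f hy, by simp⟩
    simp [this]
  · simp [image_eq_zero_of_notMem_tsupport hy]

lemma smDeg_fderiv_le (hn : 0 < n) {f : 𝔼 → 𝔼} (hf : ContDiff ℝ 1 f) (hfc : HasCompactSupport f)
    {ψ : 𝔼 → ℝ} (hψ : ContDiff ℝ 1 ψ) (hψc : HasCompactSupport ψ)
    {φ : 𝔼 → ℝ} (hφ : ContDiff ℝ 1 φ) (hφc : HasCompactSupport φ) (hφ0 : ∀ z, 0 ≤ φ z) (z : 𝔼) :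
    ‖fderiv ℝ (smDeg f ψ φ) z‖ ≤
      (n : ℝ) ^ 2 * ∫ y, φ (z - f y) * (cofNorm f y * ‖fderiv ℝ ψ y‖) := by
  obtain ⟨h1, -, h3⟩ := smDeg_hasFDerivAt hf hψ hψc hφ hφc
  have hcψ' := hψ.continuous_fderiv one_ne_zero
  have hI : Integrable fun y => φ (z - f y) * (cofNorm f y * ‖fderiv ℝ ψ y‖) := by
    apply Continuous.integrable_of_hasCompactSupport
    · exact (hφ.continuous.comp (continuous_const.sub hf.continuous)).mul
        ((continuous_cofNorm hf).mul hcψ'.norm)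
    · exact ((hψc.fderiv ℝ).norm.mul_left).mul_left
  refine (norm_le_sum_basis _).trans ?_
  have hterm : ∀ i : Fin n, |fderiv ℝ (smDeg f ψ φ) z (EuclideanSpace.single i 1)| ≤
      n * ∫ y, φ (z - f y) * (cofNorm f y * ‖fderiv ℝ ψ y‖) := by
    intro i
    have e0 : ContDiff ℝ 1 fun w => φ (z - w) := hφ.comp (contDiff_const.sub contDiff_id)
    have e := null_lagrangian hn hf hfc hψ hψc e0 i
    have e1 : ∀ w v, fderiv ℝ (fun w => φ (z - w)) w v = - fderiv ℝ φ (z - w) v := by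
      intro w v
      have := (hφ.differentiable one_ne_zero (z - w)).hasFDerivAt.comp w
          ((hasFDerivAt_id w).const_sub z)
      have e' : fderiv ℝ (fun w => φ (z - w)) w = _ := this.fderiv
      rw [e']; simp
    have e2 : fderiv ℝ (smDeg f ψ φ) z (EuclideanSpace.single i 1) =
        ∫ y, φ (z - f y) * ((diffMatrix f y).updateRow i
          (fun j => fderiv ℝ ψ y (EuclideanSpace.single j 1))).det := by
      rw [(h1 z).fderiv, ContinuousLinearMap.integral_apply (h3 z), ← neg_inj, ← e, ← integral_neg]
      refine integral_congr_ae (Eventually.of_forall fun y => ?_)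
      simp [e1]; ring
    rw [e2, ← integral_const_mul, ← Real.norm_eq_abs]
    refine norm_integral_le_of_norm_le (hI.const_mul _) (Eventually.of_forall fun y => ?_)
    rw [norm_mul, Real.norm_eq_abs, Real.norm_eq_abs, abs_of_nonneg (hφ0 _)]
    calc _ ≤ φ (z - f y) * (n * (cofNorm f y * ‖fderiv ℝ ψ y‖)) :=
          mul_le_mul_of_nonneg_left (det_updateRow_le f y i _) (hφ0 _)
      _ = _ := by ring
  refine (Finset.sum_le_sum fun i _ => hterm i).trans (le_of_eq ?_)
  simp; ring

lemma lintegral_smDeg_fderiv_le (hn : 0 < n) {f : 𝔼 → 𝔼} (hf : ContDiff ℝ 1 f)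
    (hfc : HasCompactSupport f)
    {ψ : 𝔼 → ℝ} (hψ : ContDiff ℝ 1 ψ) (hψc : HasCompactSupport ψ)
    {φ : 𝔼 → ℝ} (hφ : ContDiff ℝ 1 φ) (hφc : HasCompactSupport φ) (hφ0 : ∀ z, 0 ≤ φ z)
    (hφ1 : ∫ z, φ z = 1) :
    ∫⁻ z, ‖fderiv ℝ (smDeg f ψ φ) z‖ₑ ≤
      ENNReal.ofReal ((n : ℝ) ^ 2 * ∫ y, cofNorm f y * ‖fderiv ℝ ψ y‖) := by
  have hcψ' := hψ.continuous_fderiv one_ne_zero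
  have hcφ0 := hφ.continuous
  have hcf := hf.continuous
  have hcc := continuous_cofNorm hf
  have hg0 : ∀ y, 0 ≤ cofNorm f y * ‖fderiv ℝ ψ y‖ :=
    fun y => mul_nonneg (cofNorm_nonneg _ _) (norm_nonneg _)
  have hcg : Continuous fun y => cofNorm f y * ‖fderiv ℝ ψ y‖ := hcc.mul hcψ'.norm
  have hgc : HasCompactSupport fun y => cofNorm f y * ‖fderiv ℝ ψ y‖ := (hψc.fderiv ℝ).norm.mul_left
  have hgI : Integrable fun y => cofNorm f y * ‖fderiv ℝ ψ y‖ :=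
    hcg.integrable_of_hasCompactSupport hgc
  have hφI : Integrable φ := hcφ0.integrable_of_hasCompactSupport hφc
  have hI : ∀ z, Integrable fun y => φ (z - f y) * (cofNorm f y * ‖fderiv ℝ ψ y‖) := by
    intro z
    apply Continuous.integrable_of_hasCompactSupport
    · exact (hφ.continuous.comp (continuous_const.sub hf.continuous)).mul hcg
    · exact hgc.mul_left
  calc ∫⁻ z, ‖fderiv ℝ (smDeg f ψ φ) z‖ₑ
      ≤ ∫⁻ z, ENNReal.ofReal ((n:ℝ)^2) * ∫⁻ y, ENNReal.ofReal (φ (z - f y))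
          * ENNReal.ofReal (cofNorm f y * ‖fderiv ℝ ψ y‖) := by
        refine lintegral_mono fun z => ?_
        rw [← ofReal_norm]
        refine (ENNReal.ofReal_le_ofReal (smDeg_fderiv_le hn hf hfc hψ hψc hφ hφc hφ0 z)).trans ?_
        rw [ENNReal.ofReal_mul (by positivity), ofReal_integral_eq_lintegral_ofReal (hI z)
          (Eventually.of_forall fun y => mul_nonneg (hφ0 _) (hg0 y))]
        simp_rw [ENNReal.ofReal_mul (hφ0 _)]
        exact le_rfl
    _ = ENNReal.ofReal ((n:ℝ)^2) * ∫⁻ z, ∫⁻ y, ENNReal.ofReal (φ (z - f y))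
          * ENNReal.ofReal (cofNorm f y * ‖fderiv ℝ ψ y‖) :=
        lintegral_const_mul' _ _ ENNReal.ofReal_ne_top
    _ = ENNReal.ofReal ((n:ℝ)^2) * ∫⁻ y, ∫⁻ z, ENNReal.ofReal (φ (z - f y))
          * ENNReal.ofReal (cofNorm f y * ‖fderiv ℝ ψ y‖) := by
        rw [lintegral_lintegral_swap]
        apply Measurable.aemeasurable
        refine Measurable.mul (f := fun q : 𝔼 × 𝔼 => ENNReal.ofReal (φ (q.1 - f q.2)))
          (g := fun q : 𝔼 × 𝔼 => ENNReal.ofReal (cofNorm f q.2 * ‖fderiv ℝ ψ q.2‖)) ?_ ?_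
        · exact (ENNReal.continuous_ofReal.comp (hcφ0.comp
            (continuous_fst.sub (hcf.comp continuous_snd)))).measurable
        · exact (ENNReal.continuous_ofReal.comp (hcg.comp continuous_snd)).measurable
    _ = ENNReal.ofReal ((n:ℝ)^2) * ∫⁻ y, ENNReal.ofReal (cofNorm f y * ‖fderiv ℝ ψ y‖) := by
        congr 1
        refine lintegral_congr fun y => ?_
        rw [lintegral_mul_const' _ _ ENNReal.ofReal_ne_top,
          lintegral_sub_right_eq_self (fun z => ENNReal.ofReal (φ z)) (f y),
          ← ofReal_integral_eq_lintegral_ofReal hφI (Eventually.of_forall hφ0), hφ1]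
        simp
    _ = _ := by
        rw [ENNReal.ofReal_mul (by positivity), ofReal_integral_eq_lintegral_ofReal hgI
          (Eventually.of_forall hg0)]

lemma sobolev_smDeg (hn : 2 ≤ n) : ∃ C : ℝ, 0 < C ∧ ∀ {f : 𝔼 → 𝔼} (_ : ContDiff ℝ 1 f)
    (_ : HasCompactSupport f)
    {ψ : 𝔼 → ℝ} (_ : ContDiff ℝ 1 ψ) (_ : HasCompactSupport ψ)
    {φ : 𝔼 → ℝ} (_ : ContDiff ℝ 1 φ) (_ : HasCompactSupport φ) (_ : ∀ z, 0 ≤ φ z)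
    (_ : ∫ z, φ z = 1),
    eLpNorm (smDeg f ψ φ) (ENNReal.ofReal ((n : ℝ) / (n - 1))) volume ≤
      ENNReal.ofReal (C * ∫ y, cofNorm f y * ‖fderiv ℝ ψ y‖) := by
  set p : ℝ≥0 := Real.toNNReal ((n : ℝ) / (n - 1)) with hp
  set K : ℝ≥0 := eLpNormLESNormFDerivOneConst (volume : Measure 𝔼) p with hK
  have hn2 : (2 : ℝ) ≤ n := by exact_mod_cast hn
  refine ⟨(K + 1) * n ^ 2, by positivity, ?_⟩
  intro f hf hfc ψ hψ hψc φ hφ hφc hφ0 hφ1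
  have hpq : NNReal.HolderConjugate (Module.finrank ℝ 𝔼 : ℝ≥0) p := by
    rw [finrank_euclideanSpace_fin, ← NNReal.holderConjugate_coe_iff]
    rw [hp, Real.coe_toNNReal _ (div_nonneg (by linarith) (by linarith))]
    exact Real.HolderConjugate.conjExponent (by exact_mod_cast hn)
  have h1 := eLpNorm_le_eLpNorm_fderiv_one (volume : Measure 𝔼)
    (smDeg_contDiff hf hψ hψc hφ hφc) (smDeg_hasCompactSupport hf hψc hφc) hpq
  have h2 := lintegral_smDeg_fderiv_le (by omega) hf hfc hψ hψc hφ hφc hφ0 hφ1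
  rw [eLpNorm_one_eq_lintegral_enorm] at h1
  have hp' : ENNReal.ofReal ((n : ℝ) / (n - 1)) = (p : ℝ≥0∞) := rfl
  rw [hp']
  have hg0 : 0 ≤ ∫ y, cofNorm f y * ‖fderiv ℝ ψ y‖ :=
    integral_nonneg fun y => mul_nonneg (cofNorm_nonneg _ _) (norm_nonneg _)
  calc _ ≤ _ := h1
    _ ≤ (K : ℝ≥0∞) * ENNReal.ofReal ((n : ℝ) ^ 2 * ∫ y, cofNorm f y * ‖fderiv ℝ ψ y‖) := by
        gcongr
    _ = ENNReal.ofReal (K * ((n : ℝ) ^ 2 * ∫ y, cofNorm f y * ‖fderiv ℝ ψ y‖)) := by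
        rw [ENNReal.ofReal_mul (p := (K : ℝ)) K.2, ENNReal.ofReal_coe_nnreal]
    _ ≤ _ := by
        apply ENNReal.ofReal_le_ofReal
        rw [mul_assoc]
        gcongr
        linarith

lemma exists_cover {f : 𝔼 → 𝔼} (hf : ContDiff ℝ 1 f) :
    ∃ U : ℕ → Set 𝔼, (∀ k, IsOpen (U k)) ∧ (∀ k, InjOn f (U k)) ∧
      (∀ k, ∃ σ : ℤ, |σ| = 1 ∧ ∀ y ∈ U k, |jacDet f y| * σ = jacDet f y) ∧
      ∀ y, jacDet f y ≠ 0 → y ∈ ⋃ k, U k := by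
  set P : Set 𝔼 → Prop := fun s => IsOpen s ∧ InjOn f s ∧
    (∃ σ : ℤ, |σ| = 1 ∧ ∀ y ∈ s, |jacDet f y| * σ = jacDet f y) with hP
  set T : Set (Set 𝔼) := insert ∅ {s ∈ TopologicalSpace.countableBasis 𝔼 | P s} with hT
  have hTc : T.Countable :=
    ((TopologicalSpace.countable_countableBasis 𝔼).mono (sep_subset _ _)).insert _
  obtain ⟨U, hU⟩ := hTc.exists_eq_range (insert_nonempty _ _)
  have hPT : ∀ s ∈ T, P s := by
    rintro s (rfl | hs)
    · exact ⟨isOpen_empty, by simp, 1, by simp, by simp⟩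
    · exact hs.2
  have hPU : ∀ k, P (U k) := fun k => hPT _ (hU ▸ mem_range_self k)
  refine ⟨U, fun k => (hPU k).1, fun k => (hPU k).2.1, fun k => (hPU k).2.2, fun y hy => ?_⟩
  have hstrict : HasStrictFDerivAt f (fderiv ℝ f y) y := hf.contDiffAt.hasStrictFDerivAt one_ne_zero
  have hdet : (fderiv ℝ f y).det ≠ 0 := by rwa [← jacDet_eq]
  rw [← ContinuousLinearMap.coe_toContinuousLinearEquivOfDetNeZero _ hdet] at hstrict
  set e := hstrict.toOpenPartialHomeomorph f with he
  have hye : y ∈ e.source := hstrict.mem_toOpenPartialHomeomorph_source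
  have hinj : InjOn f e.source := e.injOn
  have hcJ := continuous_jacDet hf
  have hW : ∃ W : Set 𝔼, IsOpen W ∧ y ∈ W ∧
      ∃ σ : ℤ, |σ| = 1 ∧ ∀ y ∈ W, |jacDet f y| * σ = jacDet f y := by
    rcases lt_or_gt_of_ne hy with h | h
    · refine ⟨{y | jacDet f y < 0}, isOpen_lt hcJ continuous_const, h, -1, by simp, fun y hy => ?_⟩
      rw [abs_of_neg hy]; simp
    · refine ⟨{y | 0 < jacDet f y}, isOpen_lt continuous_const hcJ, h, 1, by simp, fun y hy => ?_⟩
      rw [abs_of_pos hy]; simp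
  obtain ⟨W, hWo, hyW, σ, hσ, hσW⟩ := hW
  obtain ⟨s, hs, hys, hsub⟩ := (TopologicalSpace.isBasis_countableBasis 𝔼).exists_subset_of_mem_open
    (show y ∈ e.source ∩ W from ⟨hye, hyW⟩) (e.open_source.inter hWo)
  have hsT : s ∈ T := Or.inr ⟨hs, TopologicalSpace.isOpen_of_mem_countableBasis hs,
    hinj.mono fun x hx => (hsub hx).1, σ, hσ, fun x hx => hσW x (hsub hx).2⟩
  rw [hU] at hsT
  obtain ⟨k, hk⟩ := hsT
  exact mem_iUnion.mpr ⟨k, hk ▸ hys⟩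

lemma area_formula {f : 𝔼 → 𝔼} (hf : ContDiff ℝ 1 f) {B : Set 𝔼} (hB : MeasurableSet B)
    (hBI : IntegrableOn (jacDet f) B) :
    ∃ u : 𝔼 → ℝ, Integrable u ∧ (∀ z, ∃ k : ℤ, u z = k) ∧
      ∀ (g : 𝔼 → ℝ) (M : ℝ), Continuous g → (∀ z, |g z| ≤ M) →
        ∫ y in B, g (f y) * jacDet f y = ∫ z, g z * u z := by
  obtain ⟨U, hUo, hUinj, hUσ, hUcov⟩ := exists_cover hf
  choose σ hσ1 hσ using hUσ
  set A : ℕ → Set 𝔼 := fun k => B ∩ disjointed U k with hA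
  have hAm : ∀ k, MeasurableSet (A k) := fun k =>
    hB.inter (MeasurableSet.disjointed (fun i => (hUo i).measurableSet) k)
  have hAU : ∀ k, A k ⊆ U k := fun k => inter_subset_right.trans (disjointed_subset U k)
  have hAd : Pairwise (Function.onFun Disjoint A) := fun i j hij =>
    (disjoint_disjointed U hij).mono inter_subset_right inter_subset_right
  have hAun : ⋃ k, A k = B ∩ ⋃ k, U k := by
    rw [hA, ← inter_iUnion, iUnion_disjointed]
  have hAB : ⋃ k, A k ⊆ B := hAun ▸ inter_subset_left
  have hAmu : MeasurableSet (⋃ k, A k) := MeasurableSet.iUnion hAm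
  have hderiv : ∀ k, ∀ x ∈ A k, HasFDerivWithinAt f (fderiv ℝ f x) (A k) x := fun k x _ =>
    (hf.differentiable one_ne_zero x).hasFDerivAt.hasFDerivWithinAt
  have hinj : ∀ k, InjOn f (A k) := fun k => (hUinj k).mono (hAU k)
  have hfAm : ∀ k, MeasurableSet (f '' A k) := fun k =>
    measurable_image_of_fderivWithin (hAm k) (hderiv k) (hinj k)
  set u : ℕ → 𝔼 → ℝ := fun k => (f '' A k).indicator (fun _ => (σ k : ℝ)) with hu
  -- change of variables on each piece
  have hcv : ∀ k (g : 𝔼 → ℝ), ∫ z, g z * u k z = ∫ y in A k, g (f y) * jacDet f y := by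
    intro k g
    have h1 : (fun z => g z * u k z) = (f '' A k).indicator (fun z => g z * σ k) := by
      ext z; simp only [hu, indicator]; split_ifs <;> simp
    rw [h1, integral_indicator (hfAm k), integral_image_eq_integral_abs_det_fderiv_smul volume
      (hAm k) (hderiv k) (hinj k)]
    refine setIntegral_congr_fun (hAm k) fun y hy => ?_
    simp only [smul_eq_mul]
    rw [← jacDet_eq]
    conv_rhs => rw [← hσ k y (hAU k hy)]
    ring
  have hσabs : ∀ k, |(σ k : ℝ)| = 1 := fun k => by exact_mod_cast congrArg (Int.cast : ℤ → ℝ) (hσ1 k)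
  have huabs : ∀ k z, ‖u k z‖ = (f '' A k).indicator (fun _ => (1 : ℝ)) z := by
    intro k z
    simp only [hu, indicator]; split_ifs <;> simp [hσabs]
  have hJint : ∀ k, IntegrableOn (jacDet f) (A k) := fun k => hBI.mono_set inter_subset_left
  have hnint : ∀ k, IntegrableOn (fun _ => (1 : ℝ)) (f '' A k) := by
    intro k
    rw [integrableOn_image_iff_integrableOn_abs_det_fderiv_smul volume (hAm k) (hderiv k) (hinj k)]
    have := (hJint k).abs
    simp only [← jacDet_eq, smul_eq_mul, mul_one]
    exact this
  have hnorm : ∀ k, ∫ z, ‖u k z‖ = ∫ y in A k, |jacDet f y| := by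
    intro k
    simp_rw [huabs]
    rw [integral_indicator (hfAm k), integral_image_eq_integral_abs_det_fderiv_smul volume
      (hAm k) (hderiv k) (hinj k)]
    simp only [← jacDet_eq, smul_eq_mul, mul_one]
  have huint : ∀ k, Integrable (u k) := by
    intro k
    have : IntegrableOn (fun _ => (σ k : ℝ)) (f '' A k) := by
      have h1 := (hnint k).const_mul (σ k : ℝ)
      simp only [mul_one] at h1
      exact h1
    exact this.integrable_indicator (hfAm k)
  have hsum : Summable fun k => ∫ z, ‖u k z‖ := by
    simp_rw [hnorm]
    exact (hasSum_integral_iUnion hAm hAd (IntegrableOn.mono_set (t := B) (f := fun y => |jacDet f y|) hBI.abs hAB)).summable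
  have hsumE : ∑' k, ∫⁻ z, ‖u k z‖ₑ ≠ ∞ := by
    have h1 : ∀ k, ∫⁻ z, ‖u k z‖ₑ = ENNReal.ofReal (∫ z, ‖u k z‖) := fun k =>
      (ofReal_integral_norm_eq_lintegral_enorm (huint k)).symm
    simp_rw [h1]
    exact hsum.tsum_ofReal_ne_top
  have hae : ∀ᵐ z, Summable fun k => u k z := by
    rw [← lintegral_tsum fun k => (huint k).aestronglyMeasurable.enorm] at hsumE
    filter_upwards [ae_lt_top' (AEMeasurable.tsum fun k =>
      (huint k).aestronglyMeasurable.enorm) hsumE] with z hz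
    apply Summable.of_norm
    have := ENNReal.summable_toReal hz.ne
    simpa using this
  have hum : AEStronglyMeasurable (fun z => ∑' k, u k z) volume := by
    refine aestronglyMeasurable_of_tendsto_ae atTop
      (f := fun N z => ∑ k ∈ Finset.range N, u k z) (fun N => ?_) ?_
    · exact Finset.aestronglyMeasurable_fun_sum _ fun k _ => (huint k).aestronglyMeasurable
    · filter_upwards [hae] with z hz
      exact hz.hasSum.tendsto_sum_nat
  refine ⟨fun z => ∑' k, u k z, ⟨hum, ?_⟩, fun z => ?_, fun g M hg hM => ?_⟩
  · rw [hasFiniteIntegral_iff_enorm]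
    refine lt_of_le_of_lt (lintegral_mono fun z => enorm_tsum_le_tsum_enorm) ?_
    rw [lintegral_tsum fun k => (huint k).aestronglyMeasurable.enorm]
    exact hsumE.lt_top
  · by_cases hz : Summable fun k => u k z
    · have hcl : IsClosed (range (Int.cast : ℤ → ℝ)) := Int.isClosedEmbedding_coe_real.isClosed_range
      have hmem : (∑' k, u k z) ∈ range (Int.cast : ℤ → ℝ) := by
        refine hcl.mem_of_tendsto hz.hasSum (Eventually.of_forall fun s => ?_)
        refine ⟨∑ k ∈ s, (f '' A k).indicator (fun _ => σ k) z, ?_⟩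
        push_cast
        refine Finset.sum_congr rfl fun k _ => ?_
        simp only [hu, indicator]; split_ifs <;> simp
      obtain ⟨k, hk⟩ := hmem
      exact ⟨k, hk.symm⟩
    · exact ⟨0, by simp [tsum_eq_zero_of_not_summable hz]⟩
  · have hgf : IntegrableOn (fun y => g (f y) * jacDet f y) B := by
      refine Integrable.bdd_mul (c := M) hBI (hg.comp hf.continuous).aestronglyMeasurable
        (Eventually.of_forall fun y => hM _)
    have hB1 : ∫ y in B, g (f y) * jacDet f y = ∫ y in ⋃ k, A k, g (f y) * jacDet f y := by
      refine setIntegral_eq_of_subset_of_forall_sdiff_eq_zero hB hAB fun y hy => ?_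
      have : jacDet f y = 0 := by
        by_contra hne
        exact hy.2 (by rw [hAun]; exact ⟨hy.1, hUcov y hne⟩)
      simp [this]
    have hS1 := hasSum_integral_iUnion hAm hAd (hgf.mono_set hAB)
    have hgu : ∀ k, Integrable fun z => g z * u k z := fun k =>
      Integrable.bdd_mul (c := M) (huint k) hg.aestronglyMeasurable (Eventually.of_forall hM)
    have hS2 := hasSum_integral_of_summable_integral_norm hgu (by
      refine Summable.of_nonneg_of_le (fun k => integral_nonneg fun _ => norm_nonneg _) (fun k => ?_)
        (hsum.mul_left M)
      rw [← integral_const_mul]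
      refine integral_mono (hgu k).norm ((huint k).norm.const_mul M) fun z => ?_
      simp only
      rw [norm_mul]
      exact mul_le_mul_of_nonneg_right (hM z) (norm_nonneg _))
    simp_rw [hcv] at hS2
    rw [hB1, hS1.unique hS2]
    simp_rw [tsum_mul_left]

/-- Closed shell. -/
def shell (x : 𝔼) (r δ : ℝ) : Set 𝔼 := {y | r - δ ≤ ‖y - x‖ ∧ ‖y - x‖ ≤ r}

/-- Radial projection to the sphere. -/
def radProj (x : 𝔼) (r : ℝ) (y : 𝔼) : 𝔼 := x + (r / ‖y - x‖) • (y - x)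

lemma isClosed_shell (x : 𝔼) (r δ : ℝ) : IsClosed (shell x r δ) := by
  have : Continuous fun y : 𝔼 => ‖y - x‖ := by fun_prop
  exact (isClosed_le continuous_const this).inter (isClosed_le this continuous_const)

lemma measurable_radProj (x : 𝔼) (r : ℝ) : Measurable (radProj x r) := by
  unfold radProj
  have : Measurable fun y : 𝔼 => ‖y - x‖ := by fun_prop
  have h2 : Measurable fun y : 𝔼 => y - x := by fun_prop
  exact ((this.const_div r).smul h2).const_add x

lemma radProj_mem {x : 𝔼} {r δ : ℝ} (hδ : 0 < δ) (hr : δ < r) {y : 𝔼} (hy : y ∈ shell x r δ) :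
    radProj x r y ∈ sphere x r := by
  have h0 : 0 < ‖y - x‖ := by linarith [hy.1]
  rw [mem_sphere, dist_eq_norm, radProj, add_sub_cancel_left, norm_smul, Real.norm_eq_abs,
    abs_of_pos (div_pos (by linarith) h0), div_mul_cancel₀ _ h0.ne']

lemma radProj_dist {x : 𝔼} {r δ : ℝ} (hδ : 0 < δ) (hr : δ < r) {y : 𝔼} (hy : y ∈ shell x r δ) :
    dist y (radProj x r y) ≤ δ := by
  have h0 : 0 < ‖y - x‖ := by linarith [hy.1]
  have h1 : y - radProj x r y = (1 - r / ‖y - x‖) • (y - x) := by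
    rw [radProj, sub_smul, one_smul]; abel
  rw [dist_eq_norm, h1, norm_smul, Real.norm_eq_abs, ← abs_of_pos h0, ← abs_mul,
    abs_of_pos h0, sub_mul, div_mul_cancel₀ _ h0.ne', one_mul, abs_le]
  constructor <;> linarith [hy.1, hy.2]

lemma shell_volume_aux {x : 𝔼} {r δ d : ℝ} (hδ : 0 < δ) (hr : δ < r) (hd : 0 < d)
    (hdδ : d ≤ δ) {A : Set 𝔼} (hA : ∀ a ∈ A, ∀ b ∈ A, dist a b ≤ d) :
    volume (shell x r δ ∩ radProj x r ⁻¹' A) ≤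
      ENNReal.ofReal (2 ^ (n + 1) * volume.real (ball (0 : 𝔼) 1) * δ * d ^ ((n : ℝ) - 1)) := by
  rcases (shell x r δ ∩ radProj x r ⁻¹' A).eq_empty_or_nonempty with h | ⟨y0, hy0, hy0A⟩
  · simp [h]
  set a := radProj x r y0 with ha
  have haS : ‖a - x‖ = r := by
    have := radProj_mem hδ hr hy0
    rwa [mem_sphere, dist_eq_norm] at this
  have hr0 : 0 < r := by linarith
  set N := ⌊δ / d⌋₊ + 1 with hN
  have hsub : shell x r δ ∩ radProj x r ⁻¹' A ⊆
      ⋃ k ∈ Finset.range N, closedBall (x + ((r - k * d) / r) • (a - x)) (2 * d) := by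
    rintro y ⟨hy, hyA⟩
    have h0 : 0 < ‖y - x‖ := by linarith [hy.1]
    set t := ‖y - x‖ with ht
    set k := ⌊(r - t) / d⌋₊ with hk
    have hnn : 0 ≤ (r - t) / d := div_nonneg (by linarith [hy.2]) hd.le
    have hk1 : (k : ℝ) * d ≤ r - t := by
      have := Nat.floor_le hnn
      rwa [le_div_iff₀ hd] at this
    have hk2 : r - t < (k + 1) * d := by
      have := Nat.lt_floor_add_one ((r - t) / d)
      rwa [div_lt_iff₀ hd] at this
    have hkN : k < N := by
      rw [hN, Nat.lt_succ_iff]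
      exact Nat.floor_le_floor (by gcongr; linarith [hy.1])
    refine mem_biUnion (by simpa using hkN : k ∈ (Finset.range N : Set ℕ)) ?_
    rw [mem_closedBall, dist_eq_norm]
    have e1 : y - (x + ((r - k * d) / r) • (a - x)) =
        (t / r) • (radProj x r y - a) + ((t - (r - k * d)) / r) • (a - x) := by
      have e2 : (t / r) • (radProj x r y - x) = y - x := by
        rw [radProj, add_sub_cancel_left, smul_smul]
        rw [show t / r * (r / ‖y - x‖) = 1 by rw [← ht]; field_simp, one_smul]
      have e3 : radProj x r y - a = (radProj x r y - x) - (a - x) := by abel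
      rw [e3, smul_sub (t / r) (radProj x r y - x), e2, sub_div t, sub_smul]
      abel
    rw [e1]
    refine (norm_add_le _ _).trans ?_
    rw [norm_smul, norm_smul, haS, Real.norm_eq_abs, Real.norm_eq_abs, abs_div, abs_div,
      abs_of_pos hr0, div_mul_cancel₀ _ hr0.ne', abs_of_pos h0]
    have h3 : t / r * ‖radProj x r y - a‖ ≤ 1 * d := by
      refine mul_le_mul ?_ ?_ (norm_nonneg _) zero_le_one
      · rw [div_le_one hr0]; exact hy.2
      · rw [← dist_eq_norm]; exact hA _ hyA _ hy0A
    have h4 : |t - (r - k * d)| ≤ d := by rw [abs_le]; constructor <;> linarith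
    linarith
  refine (measure_mono hsub).trans ((measure_biUnion_finset_le _ _).trans ?_)
  have hball : ∀ k ∈ Finset.range N, volume (closedBall (x + ((r - k * d) / r) • (a - x)) (2 * d))
      = ENNReal.ofReal ((2 * d) ^ n * volume.real (ball (0 : 𝔼) 1)) := by
    intro k _
    rw [Measure.addHaar_closedBall _ _ (by positivity), finrank_euclideanSpace_fin,
      ENNReal.ofReal_mul (by positivity), Measure.real, ENNReal.ofReal_toReal measure_ball_lt_top.ne]
  rw [Finset.sum_congr rfl hball, Finset.sum_const, Finset.card_range, nsmul_eq_mul,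
    ← ENNReal.ofReal_natCast, ← ENNReal.ofReal_mul (by positivity)]
  apply ENNReal.ofReal_le_ofReal
  have hNle : (N : ℝ) ≤ 2 * (δ / d) := by
    have h1 : (⌊δ / d⌋₊ : ℝ) ≤ δ / d := Nat.floor_le (by positivity)
    have h2 : 1 ≤ δ / d := by rwa [one_le_div hd]
    rw [hN]; push_cast; linarith
  calc (N : ℝ) * ((2 * d) ^ n * volume.real (ball (0 : 𝔼) 1))
      ≤ 2 * (δ / d) * ((2 * d) ^ n * volume.real (ball (0 : 𝔼) 1)) := by gcongr
    _ = _ := by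
      rw [Real.rpow_sub_one hd.ne', Real.rpow_natCast, mul_pow]
      field_simp
      ring

lemma shell_map_le (hn : 2 ≤ n) {x : 𝔼} {r δ : ℝ} (hδ : 0 < δ) (hr : δ < r) :
    Measure.map (radProj x r) (volume.restrict (shell x r δ)) ≤
      ENNReal.ofReal (2 ^ (n + 1) * volume.real (ball (0 : 𝔼) 1) * δ) •
        (μH[(n : ℝ) - 1] : Measure 𝔼) := by
  have hn2 : (2 : ℝ) ≤ n := by exact_mod_cast hn
  set c : ℝ := 2 ^ (n + 1) * volume.real (ball (0 : 𝔼) 1) * δ with hc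
  have hω : 0 < volume.real (ball (0 : 𝔼) 1) := 
    ENNReal.toReal_pos (measure_ball_pos _ _ one_pos).ne' measure_ball_lt_top.ne
  have hc0 : 0 < c := by positivity
  have hce : ENNReal.ofReal c ≠ 0 := by simpa using hc0
  have key : ∀ s : Set 𝔼, ediam s ≤ ENNReal.ofReal δ →
      Measure.map (radProj x r) (volume.restrict (shell x r δ)) s ≤
        ENNReal.ofReal c * ediam s ^ ((n : ℝ) - 1) := by
    intro s hs
    have h1 : Measure.map (radProj x r) (volume.restrict (shell x r δ)) s ≤
        volume (shell x r δ ∩ radProj x r ⁻¹' (closure s)) := by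
      refine (measure_mono subset_closure).trans ?_
      rw [Measure.map_apply (measurable_radProj x r) isClosed_closure.measurableSet,
        Measure.restrict_apply (measurable_radProj x r isClosed_closure.measurableSet), inter_comm]
    have hdist : ∀ d : ℝ, ediam s ≤ ENNReal.ofReal d → 0 < d →
        ∀ a ∈ closure s, ∀ b ∈ closure s, dist a b ≤ d := by
      intro d hd hd0 a ha b hb
      rw [← Metric.ediam_closure] at hd
      have := (edist_le_ediam_of_mem ha hb).trans hd
      rwa [edist_dist, ENNReal.ofReal_le_ofReal_iff hd0.le] at this
    have h2 : ∀ d : ℝ, 0 < d → d ≤ δ → ediam s ≤ ENNReal.ofReal d →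
        Measure.map (radProj x r) (volume.restrict (shell x r δ)) s ≤
          ENNReal.ofReal (c * d ^ ((n : ℝ) - 1)) := fun d hd hdδ hsd =>
      h1.trans (shell_volume_aux hδ hr hd hdδ (hdist d hsd hd))
    by_cases h0 : ediam s = 0
    · rw [h0, ENNReal.zero_rpow_of_pos (by linarith), mul_zero]
      have ht : Tendsto (fun d : ℝ => ENNReal.ofReal (c * d ^ ((n : ℝ) - 1))) (𝓝[>] 0) (𝓝 0) := by
        have : Tendsto (fun d : ℝ => c * d ^ ((n : ℝ) - 1)) (𝓝 0) (𝓝 (c * 0 ^ ((n : ℝ) - 1))) :=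
          ((Real.continuousAt_rpow_const _ _ (Or.inr (by linarith))).tendsto).const_mul c
        rw [Real.zero_rpow (by linarith), mul_zero] at this
        have h3 := ENNReal.tendsto_ofReal (this.mono_left (nhdsWithin_le_nhds (s := Ioi 0)))
        simpa using h3
      refine ge_of_tendsto ht ?_
      filter_upwards [Ioc_mem_nhdsGT hδ] with d hd
      exact h2 d hd.1 hd.2 (by simp [h0])
    · have hfin : ediam s ≠ ∞ := ne_top_of_le_ne_top ENNReal.ofReal_ne_top hs
      have hpos : 0 < (ediam s).toReal := ENNReal.toReal_pos h0 hfin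
      have h3 := h2 (ediam s).toReal hpos (ENNReal.toReal_le_of_le_ofReal hδ.le hs)
        (by rw [ENNReal.ofReal_toReal hfin])
      rwa [ENNReal.ofReal_mul hc0.le, ← ENNReal.ofReal_rpow_of_pos hpos,
        ENNReal.ofReal_toReal hfin] at h3
  have hle : (ENNReal.ofReal c)⁻¹ • Measure.map (radProj x r) (volume.restrict (shell x r δ)) ≤
      (μH[(n : ℝ) - 1] : Measure 𝔼) := by
    refine Measure.le_hausdorffMeasure _ _ (ENNReal.ofReal δ) (by simpa using hδ) fun s hs => ?_
    rw [Measure.smul_apply, smul_eq_mul]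
    calc _ ≤ (ENNReal.ofReal c)⁻¹ * (ENNReal.ofReal c * ediam s ^ ((n : ℝ) - 1)) := by
          gcongr; exact key s hs
      _ = _ := by
          rw [← mul_assoc, ENNReal.inv_mul_cancel hce ENNReal.ofReal_ne_top, one_mul]
  refine Measure.le_iff.mpr fun s _ => ?_
  have := hle s
  rw [Measure.smul_apply, smul_eq_mul] at this ⊢
  rwa [ENNReal.inv_mul_le_iff hce ENNReal.ofReal_ne_top] at this

lemma shell_lintegral_le (hn : 2 ≤ n) {x : 𝔼} {r δ : ℝ} (hδ : 0 < δ) (hr : δ < r)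
    {g : 𝔼 → ℝ≥0∞} (hg : Measurable g) :
    ∫⁻ y in shell x r δ, g (radProj x r y) ≤
      ENNReal.ofReal (2 ^ (n + 1) * volume.real (ball (0 : 𝔼) 1) * δ) *
        ∫⁻ y in sphere x r, g y ∂μH[(n : ℝ) - 1] := by
  rw [← lintegral_map hg (measurable_radProj x r), ← smul_eq_mul, ← lintegral_smul_measure,
    ← Measure.restrict_smul]
  have hae : ∀ᵐ y ∂(Measure.map (radProj x r) (volume.restrict (shell x r δ))),
      y ∈ sphere x r := by
    refine (ae_map_iff (p := fun y => y ∈ sphere x r) (measurable_radProj x r).aemeasurable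
      isClosed_sphere.measurableSet).mpr ?_
    filter_upwards [ae_restrict_mem (isClosed_shell x r δ).measurableSet] with y hy
    exact radProj_mem hδ hr hy
  rw [← Measure.restrict_eq_self_of_ae_mem hae]
  exact lintegral_mono' (Measure.restrict_mono le_rfl (shell_map_le hn hδ hr)) le_rfl

lemma normalize_lip {a b : 𝔼} (ha : 1 ≤ ‖a‖) (hb : 1 ≤ ‖b‖) :
    ‖‖a‖⁻¹ • a - ‖b‖⁻¹ • b‖ ≤ 2 * ‖a - b‖ := by
  have ha0 : 0 < ‖a‖ := by linarith
  have hb0 : 0 < ‖b‖ := by linarith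
  have e : ‖a‖⁻¹ • a - ‖b‖⁻¹ • b = ‖a‖⁻¹ • (a - b) + (‖a‖⁻¹ - ‖b‖⁻¹) • b := by
    rw [smul_sub, sub_smul]; abel
  rw [e]
  refine (norm_add_le _ _).trans ?_
  rw [norm_smul, norm_smul, Real.norm_eq_abs, Real.norm_eq_abs, abs_of_pos (inv_pos.mpr ha0)]
  have h1 : |‖a‖⁻¹ - ‖b‖⁻¹| * ‖b‖ = ‖a‖⁻¹ * |‖b‖ - ‖a‖| := by
    rw [inv_sub_inv ha0.ne' hb0.ne', abs_div, abs_mul, abs_of_pos ha0, abs_of_pos hb0]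
    field_simp
  have h2 : |‖b‖ - ‖a‖| ≤ ‖a - b‖ := by
    rw [norm_sub_rev]; exact abs_norm_sub_norm_le b a
  have h3 : ‖a‖⁻¹ ≤ 1 := inv_le_one_of_one_le₀ ha
  have h4 : 0 ≤ ‖a‖⁻¹ := by positivity
  rw [h1]
  have h5 : ‖a‖⁻¹ * |‖b‖ - ‖a‖| ≤ 1 * ‖a - b‖ := by gcongr
  have h6 : ‖a‖⁻¹ * ‖a - b‖ ≤ 1 * ‖a - b‖ := by gcongr
  linarith

lemma face_image_lt_top (m : ℕ) (i : Fin (m + 1)) (s : ℝ) (hs : |s| = 1) :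
    μH[(m : ℝ)] ((fun z : Fin m → ℝ => ‖(WithLp.toLp 2 (i.insertNth s z : Fin (m+1) → ℝ) :
      EuclideanSpace ℝ (Fin (m+1)))‖⁻¹ • (WithLp.toLp 2 (i.insertNth s z : Fin (m+1) → ℝ) :
      EuclideanSpace ℝ (Fin (m+1)))) '' (closedBall 0 1)) < ∞ := by
  set w : (Fin m → ℝ) → EuclideanSpace ℝ (Fin (m+1)) :=
    fun z => WithLp.toLp 2 (i.insertNth s z : Fin (m+1) → ℝ) with hw
  have hw1 : ∀ z, 1 ≤ ‖w z‖ := by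
    intro z
    have := PiLp.norm_apply_le (w z) i
    simpa [hw, hs] using this
  obtain ⟨K, hK⟩ : ∃ K : ℝ≥0, LipschitzWith K w := by
    refine ⟨_, (PiLp.lipschitzWith_toLp 2 (fun _ : Fin (m+1) => ℝ)).comp
      (g := fun z : Fin m → ℝ => (i.insertNth s z : Fin (m+1) → ℝ)) (Kg := 1) ?_⟩
    refine LipschitzWith.of_dist_le_mul fun a b => ?_
    rw [NNReal.coe_one, one_mul, dist_pi_le_iff dist_nonneg]
    intro j
    refine Fin.succAboveCases i ?_ ?_ j
    · simp
    · intro k; simpa using dist_le_pi_dist a b k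
  have hL : LipschitzWith (2 * K) fun z => ‖w z‖⁻¹ • w z := by
    refine LipschitzWith.of_dist_le_mul fun a b => ?_
    rw [dist_eq_norm]
    refine (normalize_lip (hw1 a) (hw1 b)).trans ?_
    have := hK.dist_le_mul a b
    rw [dist_eq_norm] at this
    push_cast
    linarith
  refine (hL.hausdorffMeasure_image_le (by positivity) _).trans_lt ?_
  have : (μH[(m : ℝ)] : Measure (Fin m → ℝ)) = volume := by
    have := hausdorffMeasure_pi_real (ι := Fin m)
    simpa using this
  rw [this]
  exact ENNReal.mul_lt_top (ENNReal.rpow_lt_top_of_nonneg (by positivity) ENNReal.coe_ne_top) measure_closedBall_lt_top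

lemma unit_sphere_lt_top (hn : 2 ≤ n) : μH[(n : ℝ) - 1] (sphere (0 : 𝔼) 1) < ∞ := by
  obtain ⟨m, rfl⟩ : ∃ m, n = m + 1 := ⟨n - 1, by omega⟩
  have hm : ((m + 1 : ℕ) : ℝ) - 1 = m := by push_cast; ring
  rw [hm]
  have hsub : sphere (0 : EuclideanSpace ℝ (Fin (m+1))) 1 ⊆ ⋃ i : Fin (m+1),
      ⋃ s ∈ ({1, -1} : Finset ℝ),
      ((fun z : Fin m → ℝ => ‖(WithLp.toLp 2 (i.insertNth s z : Fin (m+1) → ℝ) :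
      EuclideanSpace ℝ (Fin (m+1)))‖⁻¹ • (WithLp.toLp 2 (i.insertNth s z : Fin (m+1) → ℝ) :
      EuclideanSpace ℝ (Fin (m+1)))) '' (closedBall 0 1)) := by
    intro v hv
    have hv1 : ‖v‖ = 1 := by simpa using hv
    obtain ⟨i, hi⟩ := Finite.exists_max fun j => |v j|
    have hpos : 0 < |v i| := by
      rcases (abs_nonneg (v i)).eq_or_lt with h | h
      · exfalso
        have : v = 0 := by
          ext j
          have := hi j
          rw [← h] at this
          simpa using this
        simp [this] at hv1
      · exact h
    set z : Fin m → ℝ := fun k => |v i|⁻¹ * v (i.succAbove k) with hz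
    have he : (WithLp.toLp 2 (i.insertNth (|v i|⁻¹ * v i) z : Fin (m+1) → ℝ) :
        EuclideanSpace ℝ (Fin (m+1))) = |v i|⁻¹ • v := by
      ext j
      refine Fin.succAboveCases i ?_ ?_ j
      · simp
      · intro k; simp [hz]
    refine mem_iUnion.mpr ⟨i, mem_iUnion₂.mpr ⟨|v i|⁻¹ * v i, ?_, z, ?_, ?_⟩⟩
    · rcases lt_or_gt_of_ne (abs_pos.mp hpos) with h | h
      · rw [abs_of_neg h]
        have : (-v i)⁻¹ * v i = -1 := by
          rw [inv_neg, neg_mul, inv_mul_cancel₀ h.ne]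
        rw [this]; simp
      · rw [abs_of_pos h, inv_mul_cancel₀ h.ne']; simp
    · rw [mem_closedBall_zero_iff, pi_norm_le_iff_of_nonneg zero_le_one]
      intro k
      rw [hz, Real.norm_eq_abs, abs_mul, abs_inv, abs_abs, inv_mul_le_one₀ hpos]
      exact hi _
    · beta_reduce
      rw [he, norm_smul, hv1, smul_smul]
      simp [hpos.ne']
  refine (measure_mono hsub).trans_lt ?_
  refine (measure_iUnion_fintype_le _ _).trans_lt ?_
  refine ENNReal.sum_lt_top.mpr fun i _ => ?_
  refine (measure_biUnion_finset_le _ _).trans_lt ?_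
  refine ENNReal.sum_lt_top.mpr fun s hs => face_image_lt_top m i s ?_
  rcases Finset.mem_insert.mp hs with h | h
  · simp [h]
  · simp [Finset.mem_singleton.mp h]

lemma sphere_measure_le (hn : 2 ≤ n) : ∃ K : ℝ, 0 < K ∧ ∀ (x : 𝔼) (r : ℝ), 0 < r →
    μH[(n : ℝ) - 1] (sphere x r) ≤ ENNReal.ofReal (K * r ^ ((n : ℝ) - 1)) := by
  have hn2 : (2 : ℝ) ≤ n := by exact_mod_cast hn
  set K0 := (μH[(n : ℝ) - 1] (sphere (0 : 𝔼) 1)).toReal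
  have hK0 : 0 ≤ K0 := ENNReal.toReal_nonneg
  refine ⟨K0 + 1, by positivity, fun x r hr => ?_⟩
  have hsub : sphere x r ⊆ (fun y => x + r • y) '' sphere (0 : 𝔼) 1 := by
    intro y hy
    refine ⟨r⁻¹ • (y - x), ?_, ?_⟩
    · rw [mem_sphere, dist_eq_norm] at hy
      rw [mem_sphere_zero_iff_norm, norm_smul, hy, Real.norm_eq_abs,
        abs_of_pos (inv_pos.mpr hr), inv_mul_cancel₀ hr.ne']
    · simp [smul_smul, hr.ne']
  have hL : LipschitzWith r.toNNReal fun y : 𝔼 => x + r • y := by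
    refine LipschitzWith.of_dist_le_mul fun a b => ?_
    rw [Real.coe_toNNReal _ hr.le, dist_add_left, dist_smul₀, Real.norm_eq_abs, abs_of_pos hr]
  refine (measure_mono hsub).trans
    ((hL.hausdorffMeasure_image_le (by linarith) _).trans ?_)
  have h1 : (r.toNNReal : ℝ≥0∞) ^ ((n : ℝ) - 1) = ENNReal.ofReal (r ^ ((n : ℝ) - 1)) :=
    ENNReal.ofReal_rpow_of_pos hr
  have h2 : μH[(n : ℝ) - 1] (sphere (0 : 𝔼) 1) = ENNReal.ofReal K0 :=
    (ENNReal.ofReal_toReal (unit_sphere_lt_top hn).ne).symm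
  rw [h1, h2, ← ENNReal.ofReal_mul (by positivity), mul_comm]
  apply ENNReal.ofReal_le_ofReal
  gcongr
  linarith

/-- Radial cutoff. -/
def cut (x : 𝔼) (r δ : ℝ) (y : 𝔼) : ℝ := Real.smoothTransition ((r - ‖y - x‖) / δ)

lemma smoothTransition_lip : ∃ K : ℝ≥0, LipschitzWith K Real.smoothTransition := by
  obtain ⟨K, hK⟩ := ContDiffOn.exists_lipschitzOnWith (n := 1) (s := Icc (0 : ℝ) 1)
    (Real.smoothTransition.contDiff (n := 1)).contDiffOn (by norm_num) (convex_Icc 0 1) isCompact_Icc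
  refine ⟨K, LipschitzWith.of_dist_le_mul fun a b => ?_⟩
  rw [← Real.smoothTransition.projIcc (x := a), ← Real.smoothTransition.projIcc (x := b)]
  refine (hK.dist_le_mul _ (Subtype.coe_prop _) _ (Subtype.coe_prop _)).trans ?_
  gcongr
  have := (LipschitzWith.projIcc (zero_le_one (α := ℝ))).dist_le_mul a b
  rw [NNReal.coe_one, one_mul] at this
  exact this

lemma cut_nonneg (x : 𝔼) (r δ : ℝ) (y : 𝔼) : 0 ≤ cut x r δ y := Real.smoothTransition.nonneg _

lemma cut_le_one (x : 𝔼) (r δ : ℝ) (y : 𝔼) : cut x r δ y ≤ 1 := Real.smoothTransition.le_one _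

lemma cut_eq_zero {x : 𝔼} {r δ : ℝ} (hδ : 0 < δ) {y : 𝔼} (hy : r ≤ ‖y - x‖) : cut x r δ y = 0 :=
  Real.smoothTransition.zero_of_nonpos (div_nonpos_of_nonpos_of_nonneg (by linarith) hδ.le)

lemma cut_eq_one {x : 𝔼} {r δ : ℝ} (hδ : 0 < δ) {y : 𝔼} (hy : ‖y - x‖ ≤ r - δ) :
    cut x r δ y = 1 :=
  Real.smoothTransition.one_of_one_le (by rw [le_div_iff₀ hδ]; linarith)

lemma cut_contDiff {x : 𝔼} {r δ : ℝ} (hδ : 0 < δ) (hr : δ < r) : ContDiff ℝ 1 (cut x r δ) := by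
  rw [contDiff_iff_contDiffAt]
  intro y
  by_cases hy : y = x
  · have : cut x r δ =ᶠ[𝓝 y] fun _ => 1 := by
      rw [hy]
      filter_upwards [Metric.ball_mem_nhds x (by linarith : 0 < r - δ)] with z hz
      rw [mem_ball, dist_eq_norm] at hz
      exact cut_eq_one hδ hz.le
    exact contDiffAt_const.congr_of_eventuallyEq this
  · have h1 : ContDiffAt ℝ 1 (fun z : 𝔼 => ‖z - x‖) y :=
      (contDiffAt_norm ℝ (sub_ne_zero.mpr hy)).comp y (contDiffAt_id.sub contDiffAt_const)
    exact (Real.smoothTransition.contDiff.contDiffAt).comp y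
      ((contDiffAt_const.sub h1).div_const δ)

lemma cut_hasCompactSupport {x : 𝔼} {r δ : ℝ} (hδ : 0 < δ) : HasCompactSupport (cut x r δ) := by
  refine HasCompactSupport.intro (isCompact_closedBall x r) fun y hy => cut_eq_zero hδ ?_
  rw [mem_closedBall, dist_eq_norm, not_le] at hy
  exact hy.le

lemma cut_fderiv_eq_zero {x : 𝔼} {r δ : ℝ} (hδ : 0 < δ) {y : 𝔼} (hy : y ∉ shell x r δ) :
    fderiv ℝ (cut x r δ) y = 0 := by
  have hc : Continuous fun y : 𝔼 => ‖y - x‖ := by fun_prop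
  have : ∃ c : ℝ, cut x r δ =ᶠ[𝓝 y] fun _ => c := by
    by_cases h : r - δ ≤ ‖y - x‖
    · have h2 : r < ‖y - x‖ := by
        by_contra h3
        exact hy ⟨h, not_lt.mp h3⟩
      refine ⟨0, ?_⟩
      filter_upwards [(isOpen_lt continuous_const hc).mem_nhds h2] with z hz
      exact cut_eq_zero hδ (le_of_lt hz)
    · refine ⟨1, ?_⟩
      filter_upwards [(isOpen_lt hc continuous_const).mem_nhds (not_le.mp h)] with z hz
      exact cut_eq_one hδ (le_of_lt hz)
  obtain ⟨c, hc⟩ := this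
  rw [hc.fderiv_eq]
  simp

lemma cut_fderiv_le : ∃ K : ℝ, 0 < K ∧ ∀ {x : 𝔼} {r δ : ℝ} (_ : 0 < δ) (y : 𝔼),
    ‖fderiv ℝ (cut x r δ) y‖ ≤ K / δ := by
  obtain ⟨K, hK⟩ := smoothTransition_lip
  refine ⟨K + 1, by positivity, fun {x r δ} hδ y => ?_⟩
  have hL : LipschitzWith (K / δ.toNNReal) (cut x r δ) := by
    refine LipschitzWith.of_dist_le_mul fun a b => ?_
    refine (hK.dist_le_mul _ _).trans ?_
    rw [NNReal.coe_div, Real.coe_toNNReal _ hδ.le, Real.dist_eq, ← sub_div, abs_div,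
      abs_of_pos hδ, div_mul_eq_mul_div, mul_div_assoc]
    gcongr
    rw [dist_comm, dist_eq_norm, show r - ‖a - x‖ - (r - ‖b - x‖) = ‖b - x‖ - ‖a - x‖ by ring]
    refine (abs_norm_sub_norm_le _ _).trans ?_
    rw [sub_sub_sub_cancel_right]
  have := norm_fderiv_le_of_lipschitz ℝ hL (x₀ := y)
  refine this.trans ?_
  rw [NNReal.coe_div, Real.coe_toNNReal _ hδ.le]
  gcongr
  linarith

lemma sphere_ne_top (hn : 2 ≤ n) (x : 𝔼) {r : ℝ} (hr : 0 < r) :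
    μH[(n : ℝ) - 1] (sphere x r) ≠ ∞ := by
  obtain ⟨K, -, hK⟩ := sphere_measure_le hn
  exact ne_top_of_le_ne_top ENNReal.ofReal_ne_top (hK x r hr)

lemma sphere_integrableOn (hn : 2 ≤ n) {g : 𝔼 → ℝ} (hg : Continuous g) (x : 𝔼) {r : ℝ}
    (hr : 0 < r) : IntegrableOn g (sphere x r) μH[(n : ℝ) - 1] := by
  obtain ⟨M, hM⟩ := (isCompact_sphere x r).exists_bound_of_continuousOn hg.continuousOn
  exact IntegrableOn.of_bound (sphere_ne_top hn x hr).lt_top hg.aestronglyMeasurable M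
    (by filter_upwards [ae_restrict_mem isClosed_sphere.measurableSet] with y hy using hM y hy)

lemma cut_bound (hn : 2 ≤ n) : ∃ C : ℝ, 0 < C ∧ ∀ {g : 𝔼 → ℝ} (_ : Continuous g)
    (_ : ∀ y, 0 ≤ g y) (x : 𝔼) {r : ℝ} (_ : 0 < r) {η : ℝ} (_ : 0 < η),
    ∀ᶠ δ in 𝓝[>] (0 : ℝ), ∫ y, g y * ‖fderiv ℝ (cut x r δ) y‖ ≤
      C * (∫ y in sphere x r, g y ∂μH[(n : ℝ) - 1] + η) := by
  obtain ⟨K, hK0, hK⟩ := cut_fderiv_le (n := n)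
  set c : ℝ := 2 ^ (n + 1) * volume.real (ball (0 : 𝔼) 1) with hc
  have hω : 0 < volume.real (ball (0 : 𝔼) 1) := 
    ENNReal.toReal_pos (measure_ball_pos _ _ one_pos).ne' measure_ball_lt_top.ne
  have hc0 : 0 < c := by positivity
  refine ⟨K * c, by positivity, fun {g} hg hg0 x {r} hr {η} hη => ?_⟩
  have hfin := sphere_ne_top hn x hr
  set A := (μH[(n : ℝ) - 1] (sphere x r)).toReal with hA
  have hA0 : 0 ≤ A := ENNReal.toReal_nonneg
  set η' := η / (A + 1) with hη'
  have hη0 : 0 < η' := by positivity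
  have huc := (isCompact_closedBall x r).uniformContinuousOn_of_continuous hg.continuousOn
  rw [Metric.uniformContinuousOn_iff] at huc
  obtain ⟨d, hd, hd2⟩ := huc η' hη0
  have hgS : IntegrableOn g (sphere x r) μH[(n : ℝ) - 1] :=
    sphere_integrableOn hn hg x hr
  filter_upwards [Ioo_mem_nhdsGT (lt_min hd hr)] with δ hδ
  have hδ0 : 0 < δ := hδ.1
  have hδr : δ < r := hδ.2.trans_le (min_le_right _ _)
  have hδd : δ < d := hδ.2.trans_le (min_le_left _ _)
  have hSnn : 0 ≤ ∫ y in sphere x r, g y ∂μH[(n : ℝ) - 1] := integral_nonneg hg0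
  have hle : ∫⁻ y, ENNReal.ofReal (g y * ‖fderiv ℝ (cut x r δ) y‖) ≤
      ENNReal.ofReal (K * c * (∫ y in sphere x r, g y ∂μH[(n : ℝ) - 1] + η)) := by
    calc ∫⁻ y, ENNReal.ofReal (g y * ‖fderiv ℝ (cut x r δ) y‖)
        = ∫⁻ y in shell x r δ, ENNReal.ofReal (g y * ‖fderiv ℝ (cut x r δ) y‖) := by
          rw [← lintegral_indicator (isClosed_shell x r δ).measurableSet]
          refine lintegral_congr fun y => ?_
          by_cases hy : y ∈ shell x r δ
          · rw [indicator_of_mem hy]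
          · rw [indicator_of_notMem hy, cut_fderiv_eq_zero hδ0 hy]; simp
      _ ≤ ∫⁻ y in shell x r δ, ENNReal.ofReal (K / δ) *
            ENNReal.ofReal (g (radProj x r y) + η') := by
          refine setLIntegral_mono' (isClosed_shell x r δ).measurableSet fun y hy => ?_
          rw [← ENNReal.ofReal_mul (by positivity), mul_comm]
          apply ENNReal.ofReal_le_ofReal
          refine mul_le_mul (hK hδ0 y) ?_ (hg0 y) (by positivity)
          have h1 := hd2 y (by rw [mem_closedBall, dist_eq_norm]; exact hy.2) (radProj x r y)
            (sphere_subset_closedBall (radProj_mem hδ0 hδr hy))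
            ((radProj_dist hδ0 hδr hy).trans_lt hδd)
          rw [Real.dist_eq] at h1
          linarith [le_abs_self (g y - g (radProj x r y))]
      _ = ENNReal.ofReal (K / δ) * ∫⁻ y in shell x r δ,
            ENNReal.ofReal (g (radProj x r y) + η') :=
          lintegral_const_mul' _ _ ENNReal.ofReal_ne_top
      _ ≤ ENNReal.ofReal (K / δ) * (ENNReal.ofReal (c * δ) *
            ∫⁻ y in sphere x r, ENNReal.ofReal (g y + η') ∂μH[(n : ℝ) - 1]) := by
          gcongr
          exact shell_lintegral_le hn hδ0 hδr (g := fun y => ENNReal.ofReal (g y + η'))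
            (by fun_prop)
      _ = ENNReal.ofReal (K / δ) * (ENNReal.ofReal (c * δ) *
            ENNReal.ofReal (∫ y in sphere x r, (g y + η') ∂μH[(n : ℝ) - 1])) := by
          rw [ofReal_integral_eq_lintegral_ofReal]
          · exact hgS.add (integrableOn_const hfin)
          · exact Eventually.of_forall fun y => by have := hg0 y; positivity
      _ = ENNReal.ofReal (K * c * (∫ y in sphere x r, g y ∂μH[(n : ℝ) - 1] + A * η')) := by
          rw [integral_add hgS (integrableOn_const hfin), setIntegral_const, smul_eq_mul,
            Measure.real, ← hA, ← ENNReal.ofReal_mul (by positivity),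
            ← ENNReal.ofReal_mul (by positivity)]
          congr 1
          field_simp
      _ ≤ _ := by
          apply ENNReal.ofReal_le_ofReal
          gcongr
          rw [hη', mul_div_assoc', div_le_iff₀ (by positivity)]
          nlinarith
  have hnn : 0 ≤ᵐ[volume] fun y => g y * ‖fderiv ℝ (cut x r δ) y‖ :=
    Eventually.of_forall fun y => mul_nonneg (hg0 y) (norm_nonneg _)
  have hcont : Continuous fun y => g y * ‖fderiv ℝ (cut x r δ) y‖ :=
    hg.mul ((cut_contDiff hδ0 hδr).continuous_fderiv (by norm_num)).norm
  rw [integral_eq_lintegral_of_nonneg_ae hnn hcont.aestronglyMeasurable]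
  exact ENNReal.toReal_le_of_le_ofReal (by positivity) hle

lemma smDeg_tendsto {f : 𝔼 → 𝔼} (hf : ContDiff ℝ 1 f) {φ : 𝔼 → ℝ} (hφ : Continuous φ)
    (x : 𝔼) {r : ℝ} {d : ℕ → ℝ} (hd0 : ∀ k, 0 < d k)
    (hd : Tendsto d atTop (𝓝 0)) (z : 𝔼) :
    Tendsto (fun k => smDeg f (cut x r (d k)) φ z) atTop
      (𝓝 (∫ y in ball x r, φ (z - f y) * jacDet f y)) := by
  have hcJ := continuous_jacDet hf
  have hcg : Continuous fun y => φ (z - f y) * jacDet f y :=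
    (hφ.comp (continuous_const.sub hf.continuous)).mul hcJ
  have hB : IntegrableOn (fun y => φ (z - f y) * jacDet f y) (ball x r) :=
    (hcg.continuousOn.integrableOn_compact (isCompact_closedBall x r)).mono_set
      ball_subset_closedBall
  have h1 : ∀ k, smDeg f (cut x r (d k)) φ z =
      ∫ y in ball x r, cut x r (d k) y * (φ (z - f y) * jacDet f y) := by
    intro k
    rw [smDeg, setIntegral_eq_integral_of_forall_compl_eq_zero]
    · simp only [mul_assoc]
    · intro y hy
      rw [cut_eq_zero (hd0 k), zero_mul]
      rw [mem_ball, dist_eq_norm, not_lt] at hy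
      exact hy
  simp only [h1]
  refine tendsto_integral_of_dominated_convergence
    (fun y => ‖φ (z - f y) * jacDet f y‖) ?_ hB.norm ?_ ?_
  · intro k
    have : Continuous (cut x r (d k)) := by
      unfold cut
      exact Real.smoothTransition.continuous.comp (by fun_prop)
    exact (this.mul hcg).aestronglyMeasurable
  · intro k
    refine Eventually.of_forall fun y => ?_
    rw [norm_mul, Real.norm_eq_abs, abs_of_nonneg (cut_nonneg _ _ _ _)]
    exact mul_le_of_le_one_left (norm_nonneg _) (cut_le_one _ _ _ _)
  · filter_upwards [ae_restrict_mem isOpen_ball.measurableSet] with y hy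
    rw [mem_ball, dist_eq_norm] at hy
    have hev : ∀ᶠ k in atTop, d k < r - ‖y - x‖ := hd.eventually (gt_mem_nhds (by linarith))
    refine tendsto_const_nhds.congr' ?_
    filter_upwards [hev] with k hk
    rw [cut_eq_one (hd0 k) (by linarith), one_mul]

lemma core (hn : 2 ≤ n) : ∃ C : ℝ, 0 < C ∧ ∀ {f : 𝔼 → 𝔼} (_ : ContDiff ℝ 1 f)
    (_ : HasCompactSupport f) (x : 𝔼) {r : ℝ} (_ : 0 < r),
    |∫ y in ball x r, jacDet f y| ≤
      (C * ∫ y in sphere x r, cofNorm f y ∂μH[(n : ℝ) - 1]) ^ ((n : ℝ) / (n - 1)) := by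
  have hn2 : (2 : ℝ) ≤ n := by exact_mod_cast hn
  obtain ⟨C1, hC1, h1⟩ := sobolev_smDeg hn
  obtain ⟨C2, hC2, h2⟩ := cut_bound hn
  refine ⟨C1 * C2, by positivity, fun {f} hf hfc x {r} hr => ?_⟩
  have hcJ := continuous_jacDet hf
  have hcC := continuous_cofNorm hf
  have hBI : IntegrableOn (jacDet f) (ball x r) :=
    (hcJ.continuousOn.integrableOn_compact (isCompact_closedBall x r)).mono_set
      ball_subset_closedBall
  obtain ⟨u, huI, huZ, hu⟩ := area_formula hf isOpen_ball.measurableSet hBI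
  set S : ℝ := ∫ y in sphere x r, cofNorm f y ∂μH[(n : ℝ) - 1] with hS
  have hS0 : 0 ≤ S := integral_nonneg fun y => cofNorm_nonneg f y
  set p : ℝ := (n : ℝ) / (n - 1) with hp
  have hp1 : 1 ≤ p := by rw [hp, le_div_iff₀ (by linarith)]; linarith
  have hd0 : ∀ k : ℕ, 0 < r / (k + 2) := fun k => by positivity
  have hdr : ∀ k : ℕ, r / (k + 2) < r := fun k => by
    rw [div_lt_iff₀ (by positivity)]; nlinarith [(Nat.cast_nonneg k : (0:ℝ) ≤ k)]
  have hd : Tendsto (fun k : ℕ => r / ((k : ℝ) + 2)) atTop (𝓝 0) :=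
    tendsto_const_nhds.div_atTop (tendsto_natCast_atTop_atTop.atTop_add tendsto_const_nhds)
  have hd' : Tendsto (fun k : ℕ => r / ((k : ℝ) + 2)) atTop (𝓝[>] 0) :=
    tendsto_nhdsWithin_iff.mpr ⟨hd, Eventually.of_forall hd0⟩
  have hη : ∀ η : ℝ, 0 < η →
      eLpNorm u (ENNReal.ofReal p) volume ≤ ENNReal.ofReal (C1 * (C2 * (S + η))) := by
    intro η hη
    let φ : ℕ → ContDiffBump (0 : 𝔼) := fun k =>
      ⟨1 / ((k : ℝ) + 1), 2 * (1 / ((k : ℝ) + 1)), by positivity, by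
        have : 0 < 1 / ((k : ℝ) + 1) := by positivity
        linarith⟩
    have hconv : ∀ k z, (convolution ((φ k).normed volume) u (ContinuousLinearMap.lsmul ℝ ℝ) volume) z =
        ∫ y in ball x r, (φ k).normed volume (z - f y) * jacDet f y := by
      intro k z
      obtain ⟨M, hM⟩ := ((φ k).continuous_normed (μ := volume)).bounded_above_of_compact_support
        (φ k).hasCompactSupport_normed
      rw [hu (fun w => (φ k).normed volume (z - w)) M
        ((φ k).continuous_normed.comp (continuous_const.sub continuous_id)) (fun w => hM _),
        convolution_lsmul_swap]
      rfl
    refine Lp.eLpNorm_le_of_ae_tendsto (u := atTop)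
      (f := fun k => (convolution ((φ k).normed volume) u (ContinuousLinearMap.lsmul ℝ ℝ) volume))
      (Eventually.of_forall fun k => ?_) (fun k => ?_) ?_
    · refine Lp.eLpNorm_le_of_ae_tendsto (u := atTop)
        (f := fun j : ℕ => smDeg f (cut x r (r / ((j : ℝ) + 2))) ((φ k).normed volume)) ?_ ?_ ?_
      · filter_upwards [hd'.eventually (h2 hcC (cofNorm_nonneg f) x hr hη)] with j hj
        refine (h1 hf hfc (cut_contDiff (hd0 j) (hdr j)) (cut_hasCompactSupport (hd0 j))
          ((φ k).contDiff_normed (n := 1)) (φ k).hasCompactSupport_normed (φ k).nonneg_normed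
          (φ k).integral_normed).trans ?_
        apply ENNReal.ofReal_le_ofReal
        gcongr
      · intro j
        exact (smDeg_contDiff hf (cut_contDiff (hd0 j) (hdr j)) (cut_hasCompactSupport (hd0 j))
          ((φ k).contDiff_normed (n := 1))
          (φ k).hasCompactSupport_normed).continuous.aestronglyMeasurable
      · refine Eventually.of_forall fun z => ?_
        rw [hconv]
        exact smDeg_tendsto hf (φ k).continuous_normed x hd0 hd z
    · refine Continuous.aestronglyMeasurable ?_
      exact (φ k).hasCompactSupport_normed.continuous_convolution_left _
        (φ k).continuous_normed huI.locallyIntegrable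
    · refine ContDiffBump.ae_convolution_tendsto_right_of_locallyIntegrable (K := 2) ?_
        (Eventually.of_forall fun k => le_rfl) huI.locallyIntegrable
      have : Tendsto (fun k : ℕ => 2 * (1 / ((k : ℝ) + 1))) atTop (𝓝 (2 * 0)) :=
        tendsto_one_div_add_atTop_nhds_zero_nat.const_mul 2
      rw [mul_zero] at this
      exact this
  have hu1 : eLpNorm u (ENNReal.ofReal p) volume ≤ ENNReal.ofReal (C1 * C2 * S) := by
    have ht : Tendsto (fun η : ℝ => ENNReal.ofReal (C1 * (C2 * (S + η)))) (𝓝[>] 0)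
        (𝓝 (ENNReal.ofReal (C1 * C2 * S))) := by
      have : Continuous fun η : ℝ => ENNReal.ofReal (C1 * (C2 * (S + η))) :=
        ENNReal.continuous_ofReal.comp (by fun_prop)
      have h3 := (this.tendsto 0).mono_left (nhdsWithin_le_nhds (s := Ioi 0))
      rwa [add_zero, ← mul_assoc] at h3
    refine ge_of_tendsto ht ?_
    filter_upwards [self_mem_nhdsWithin] with η h using hη η h
  have h3 : ∫ y in ball x r, jacDet f y = ∫ z, u z := by
    have := hu (fun _ => 1) 1 continuous_const (by simp)
    simpa using this
  rw [h3]
  have hpw : ∀ z, ‖u z‖ₑ ≤ ‖u z‖ₑ ^ p := by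
    intro z
    obtain ⟨k, hk⟩ := huZ z
    by_cases hk0 : k = 0
    · simp [hk, hk0]
    · have h4 : (1 : ℝ) ≤ |u z| := by
        rw [hk]; exact_mod_cast Int.one_le_abs hk0
      have h5 : 1 ≤ ‖u z‖ₑ := by
        rw [← ofReal_norm, Real.norm_eq_abs]
        simpa using ENNReal.ofReal_le_ofReal h4
      calc ‖u z‖ₑ = ‖u z‖ₑ ^ (1 : ℝ) := by rw [ENNReal.rpow_one]
        _ ≤ _ := ENNReal.rpow_le_rpow_of_exponent_le h5 hp1
  have hp0 : 0 < p := by linarith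
  have h6 : ∫⁻ z, ‖u z‖ₑ ≤ ENNReal.ofReal ((C1 * C2 * S) ^ p) := by
    calc ∫⁻ z, ‖u z‖ₑ ≤ ∫⁻ z, ‖u z‖ₑ ^ p := lintegral_mono hpw
      _ = (eLpNorm u (ENNReal.ofReal p) volume) ^ p := by
          rw [eLpNorm_eq_lintegral_rpow_enorm_toReal (by simpa using hp0) ENNReal.ofReal_ne_top,
            ENNReal.toReal_ofReal hp0.le, ← ENNReal.rpow_mul, one_div, inv_mul_cancel₀ hp0.ne',
            ENNReal.rpow_one]
      _ ≤ (ENNReal.ofReal (C1 * C2 * S)) ^ p := by gcongr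
      _ = _ := ENNReal.ofReal_rpow_of_nonneg (by positivity) hp0.le
  have h7 : |∫ z, u z| ≤ (∫⁻ z, ‖u z‖ₑ).toReal := by
    rw [← Real.norm_eq_abs]
    refine (norm_integral_le_integral_norm _).trans ?_
    rw [integral_norm_eq_lintegral_enorm huI.aestronglyMeasurable]
  exact h7.trans (ENNReal.toReal_le_of_le_ofReal (by positivity) h6)

lemma global_ext {Ω : Set 𝔼} (hΩ : IsOpen Ω) {f : 𝔼 → 𝔼} (hf : ∀ y ∈ Ω, ContDiffAt ℝ 1 f y)
    {x : 𝔼} {r : ℝ} (hr : 0 < r) (hB : closedBall x r ⊆ Ω) :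
    ∃ F : 𝔼 → 𝔼, ContDiff ℝ 1 F ∧ HasCompactSupport F ∧
      ∀ y ∈ closedBall x r, F =ᶠ[𝓝 y] f := by
  obtain ⟨ε, hε, hεΩ⟩ := (isCompact_closedBall x r).exists_cthickening_subset_open hΩ hB
  rw [cthickening_closedBall hε.le hr.le] at hεΩ
  let b : ContDiffBump x := ⟨r + ε / 2, r + ε, by positivity, by linarith⟩
  have hts : tsupport b ⊆ Ω := by
    rw [b.tsupport_eq, add_comm] at *
    exact hεΩ
  refine ⟨fun y => b y • f y, ?_, ?_, ?_⟩
  · rw [contDiff_iff_contDiffAt]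
    intro y
    by_cases hy : y ∈ tsupport b
    · exact b.contDiff.contDiffAt.smul (hf y (hts hy))
    · have h0 : (fun y => b y • f y) =ᶠ[𝓝 y] fun _ => 0 := by
        filter_upwards [(isClosed_tsupport b).isOpen_compl.mem_nhds hy] with z hz
        rw [image_eq_zero_of_notMem_tsupport hz, zero_smul]
      exact contDiffAt_const.congr_of_eventuallyEq h0
  · exact b.hasCompactSupport.smul_right
  · intro y hy
    have : y ∈ ball x (r + ε / 2) := by
      rw [mem_closedBall] at hy; rw [mem_ball]; linarith
    filter_upwards [isOpen_ball.mem_nhds this] with z hz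
    rw [b.one_of_mem_closedBall (ball_subset_closedBall hz), one_smul]

theorem isoperimetric_jacobian (hn : 2 ≤ n) :
    ∃ C : ℝ, 0 < C ∧
      ∀ (Ω : Set (EuclideanSpace ℝ (Fin n))), IsOpen Ω →
        ∀ f : EuclideanSpace ℝ (Fin n) → EuclideanSpace ℝ (Fin n),
          (∀ y ∈ Ω, ContDiffAt ℝ 1 f y) →
          ∀ (x : EuclideanSpace ℝ (Fin n)) (r : ℝ), 0 < r → Metric.closedBall x r ⊆ Ω →
            |⨍ y in Metric.ball x r, jacDet f y| ≤
              C * (⨍ y in Metric.sphere x r, cofNorm f y ∂(μH[(n : ℝ) - 1])) ^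
                    ((n : ℝ) / (n - 1)) := by
  have hn2 : (2 : ℝ) ≤ n := by exact_mod_cast hn
  obtain ⟨C, hC, hcore⟩ := core hn
  obtain ⟨K, hK, hsph⟩ := sphere_measure_le hn
  set p : ℝ := (n : ℝ) / (n - 1) with hp
  set ω : ℝ := volume.real (ball (0 : EuclideanSpace ℝ (Fin n)) 1) with hωd
  have hω : 0 < ω :=
    ENNReal.toReal_pos (measure_ball_pos _ _ one_pos).ne' measure_ball_lt_top.ne
  refine ⟨(C * K) ^ p / ω, by positivity, ?_⟩
  intro Ω hΩ f hf x r hr hB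
  obtain ⟨F, hF, hFc, hFf⟩ := global_ext hΩ hf hr hB
  have hD : ∀ y ∈ closedBall x r, diffMatrix f y = diffMatrix F y := by
    intro y hy
    ext i j
    rw [diffMatrix, diffMatrix, (hFf y hy).fderiv_eq]
  have e1 : ⨍ y in ball x r, jacDet f y = ⨍ y in ball x r, jacDet F y :=
    setAverage_congr_fun isOpen_ball.measurableSet
      (Eventually.of_forall fun y hy => by
        rw [jacDet, jacDet, hD y (ball_subset_closedBall hy)])
  have e2 : ⨍ y in sphere x r, cofNorm f y ∂(μH[(n : ℝ) - 1]) =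
      ⨍ y in sphere x r, cofNorm F y ∂(μH[(n : ℝ) - 1]) :=
    setAverage_congr_fun isClosed_sphere.measurableSet
      (Eventually.of_forall fun y hy => by
        rw [cofNorm, cofNorm, hD y (sphere_subset_closedBall hy)])
  rw [e1, e2]
  have hc := hcore hF hFc x hr
  have hfin := sphere_ne_top hn x hr
  rw [← measure_smul_setAverage _ hfin, smul_eq_mul] at hc
  set a := ⨍ y in sphere x r, cofNorm F y ∂(μH[(n : ℝ) - 1]) with ha
  have ha0 : 0 ≤ a := by
    rw [ha, setAverage_eq]
    exact smul_nonneg (by positivity) (integral_nonneg fun y => cofNorm_nonneg F y)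
  have hA : (μH[(n : ℝ) - 1] : Measure (EuclideanSpace ℝ (Fin n))).real (sphere x r) ≤
      K * r ^ ((n : ℝ) - 1) :=
    ENNReal.toReal_le_of_le_ofReal (by positivity) (hsph x r hr)
  have hvol : volume.real (ball x r) = r ^ n * ω := by
    rw [Measure.real, Measure.addHaar_ball_of_pos _ _ hr, finrank_euclideanSpace_fin,
      ENNReal.toReal_mul, ENNReal.toReal_ofReal (by positivity)]
    rfl
  have hp0 : 0 < p := div_pos (by linarith) (by linarith)
  have hrp : (r ^ ((n : ℝ) - 1)) ^ p = r ^ n := by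
    rw [← Real.rpow_mul hr.le, hp, mul_div_cancel₀ _ (by linarith), Real.rpow_natCast]
  have hA0 : 0 ≤ (μH[(n : ℝ) - 1] : Measure (EuclideanSpace ℝ (Fin n))).real (sphere x r) :=
    measureReal_nonneg
  have hbound : |∫ y in ball x r, jacDet F y| ≤ (C * K) ^ p * r ^ n * a ^ p := by
    calc _ ≤ _ := hc
      _ ≤ (C * K * r ^ ((n : ℝ) - 1) * a) ^ p := by
          refine Real.rpow_le_rpow (by positivity) ?_ hp0.le
          rw [mul_assoc C K, mul_assoc C]
          gcongr
      _ = _ := by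
          rw [Real.mul_rpow (by positivity) ha0, Real.mul_rpow (by positivity) (by positivity), hrp]
  rw [setAverage_eq, smul_eq_mul, abs_mul, hvol, abs_of_pos (by positivity)]
  calc _ ≤ (r ^ n * ω)⁻¹ * ((C * K) ^ p * r ^ n * a ^ p) := by gcongr
    _ = _ := by field_simp
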